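/- Assume G ∈ C²(Ω × Y × ℝ) satisfies (Reg), (Mono), (Twist), (Gen_Ω) and (Gen_∂X), that X ⊆ Ω is compact, that ρ is a continuous probability density supported in X, and that int(X) ∩ {ρ > 0} is path-connected. Let ψ ∈ ℝ^N satisfy Hᵢ(ψ) > 0 for every i. Then: (1) the differential DH(ψ) has rank N − 1; (2) im(DH(ψ)) = 𝟙^⊥ = {v ∈ ℝ^N : Σᵢ vᵢ = 0}, where 𝟙 = (1,…,1); (3) every nonzero w ∈ ker(DH(ψ)) satisfies wᵢ ≠ 0 for all i ∈ {1,…,N}, and all the wᵢ have the same sign. -/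

import Mathlib

set_option autoImplicit false

open MeasureTheory Set

noncomputable section

variable {d N : ℕ}

/-- Generalized Laguerre cell associated to `ψ` and index `i`. -/
def Lag (Ω : Set (EuclideanSpace ℝ (Fin d))) (G : EuclideanSpace ℝ (Fin d) → Fin N → ℝ → ℝ)
    (ψ : Fin N → ℝ) (i : Fin N) : Set (EuclideanSpace ℝ (Fin d)) :=
  {x ∈ Ω | ∀ j, G x j (ψ j) ≤ G x i (ψ i)}

/-- Interface `Γᵢⱼ(ψ)` between two cells. -/
def Gam (Ω : Set (EuclideanSpace ℝ (Fin d))) (G : EuclideanSpace ℝ (Fin d) → Fin N → ℝ → ℝ)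
    (ψ : Fin N → ℝ) (i j : Fin N) : Set (EuclideanSpace ℝ (Fin d)) :=
  {x ∈ Ω | G x i (ψ i) = G x j (ψ j)}

/-- The mass function `H(ψ) = (μ(Lagᵢ(ψ)))ᵢ` where `μ` has density `ρ`. -/
def Hfun (Ω : Set (EuclideanSpace ℝ (Fin d))) (G : EuclideanSpace ℝ (Fin d) → Fin N → ℝ → ℝ)
    (ρ : EuclideanSpace ℝ (Fin d) → ℝ) (ψ : Fin N → ℝ) : Fin N → ℝ :=
  fun i => ((volume.withDensity fun x => ENNReal.ofReal (ρ x)) (Lag Ω G ψ i)).toReal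

/-!
The column `DH(ψ) eⱼ` records how mass is redistributed between the cells when `ψⱼ` increases. By
(Mono) cell `j` shrinks and all other cells grow, while the total mass is constant; so `DH(ψ)` is
the generator of a finite Markov jump process, and the theorem is Perron–Frobenius once that process
is known to be irreducible.

For irreducibility, split the indices into `S` and `Sᶜ`. A set of vanishing `ℋ^{d-1}`-measure does
not disconnect the connected open set `{ρ > 0}`, so by (Gen_Ω) the boundary between the cells in `S`
and those in `Sᶜ` contains a point where exactly two cells `j ∈ S`, `i ∈ Sᶜ` meet. By (Twist) the
interface is a `C¹` hypersurface there, and raising `ψⱼ` by `s` moves it across a slab of mass at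
least `κ s`, so that `DH(ψ)ᵢⱼ ≥ κ > 0`.

Differentiability of `H` is obtained by slicing: a partition of unity and a linear change of
coordinates reduce it to a product `Y × ℝ` in which every interface is transverse to the fibres `ℝ`.
The lengths of the fibres are Lipschitz in `ψ`, and differentiable for almost every fibre since by
(Gen_Ω) the points lying on two interfaces project to a null set; dominated convergence concludes.
-/

open Filter Topology

section IrreducibleGenerator

lemma finrank_ker_sum_proj {ι K : Type*} [Fintype ι] [Nonempty ι] [Field K] :
    Module.finrank K (LinearMap.ker (∑ i, LinearMap.proj i : (ι → K) →ₗ[K] K)) =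
      Fintype.card ι - 1 := by
  classical
  have hsurj : Function.Surjective (∑ i, LinearMap.proj i : (ι → K) →ₗ[K] K) := by
    refine fun c => ⟨Pi.single (Classical.arbitrary ι) c, ?_⟩
    simp
  have hrank := LinearMap.finrank_range_add_finrank_ker (∑ i, LinearMap.proj i : (ι → K) →ₗ[K] K)
  rw [LinearMap.range_eq_top.2 hsurj, finrank_top, Module.finrank_self,
    Module.finrank_fintype_fun_eq_card] at hrank
  omega

variable {ι K : Type*} [Fintype ι] [DecidableEq ι] [Field K] [LinearOrder K]
  [IsStrictOrderedRing K]

/-- `M` is the generator of an irreducible finite Markov jump process (acting on measures): the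
total mass is preserved, transfers `j → i` are nonnegative, and every proper nonempty set of states
leaks into its complement. The diagonal entries are then automatically nonpositive. -/
structure IsIrreducibleGenerator (M : (ι → K) →ₗ[K] (ι → K)) : Prop where
  sum_apply (w : ι → K) : ∑ i, M w i = 0
  nonneg {i j : ι} (hij : i ≠ j) : 0 ≤ M (Pi.single j 1) i
  exists_pos (S : Finset ι) (hS : S.Nonempty) (hSc : Sᶜ.Nonempty) :
    ∃ j ∈ S, ∃ i ∈ Sᶜ, 0 < M (Pi.single j 1) i

namespace IsIrreducibleGenerator

variable {M : (ι → K) →ₗ[K] (ι → K)} {w : ι → K}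

lemma outflow_nonneg (hM : IsIrreducibleGenerator M) {S : Finset ι} {j : ι} (hj : j ∈ S) :
    0 ≤ ∑ i ∈ Sᶜ, M (Pi.single j 1) i :=
  Finset.sum_nonneg fun _ hi => hM.nonneg (ne_of_mem_of_not_mem hj (Finset.mem_compl.1 hi)).symm

lemma outflow_nonpos (hM : IsIrreducibleGenerator M) {S : Finset ι} {j : ι} (hj : j ∉ S) :
    ∑ i ∈ Sᶜ, M (Pi.single j 1) i ≤ 0 := by
  have hinflow : 0 ≤ ∑ i ∈ S, M (Pi.single j 1) i :=
    Finset.sum_nonneg fun _ hi => hM.nonneg (ne_of_mem_of_not_mem hi hj)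
  have hzero := hM.sum_apply (Pi.single j 1)
  rw [← Finset.sum_add_sum_compl S] at hzero
  linarith

lemma forall_pos_of_mem_ker (hM : IsIrreducibleGenerator M) (hw : M w = 0) {i₀ : ι}
    (hi₀ : 0 < w i₀) (i : ι) : 0 < w i := by
  by_contra hi
  let S : Finset ι := {i | 0 < w i}
  have mem_S (k : ι) : k ∈ S ↔ 0 < w k := Finset.mem_filter_univ k
  obtain ⟨j, hj, k, hk, hjk⟩ := hM.exists_pos S ⟨i₀, (mem_S i₀).2 hi₀⟩
    ⟨i, Finset.mem_compl.2 fun h => hi ((mem_S i).1 h)⟩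
  -- The net flow out of `S` vanishes, although no state contributes negatively to it.
  have hflow : ∑ l, w l * ∑ i ∈ Sᶜ, M (Pi.single l 1) i = 0 := by
    simp_rw [Finset.mul_sum]
    rw [Finset.sum_comm]
    refine Finset.sum_eq_zero fun i _ => ?_
    have hexpand : M w i = ∑ l, w l * M (Pi.single l 1) i := by
      conv_lhs => rw [pi_eq_sum_univ' w]
      simp
    rw [← hexpand, hw, Pi.zero_apply]
  have hterm (l : ι) : 0 ≤ w l * ∑ i ∈ Sᶜ, M (Pi.single l 1) i := by
    by_cases hl : l ∈ S
    · exact mul_nonneg ((mem_S l).1 hl).le (hM.outflow_nonneg hl)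
    · exact mul_nonneg_of_nonpos_of_nonpos (not_lt.1 (mt (mem_S l).2 hl)) (hM.outflow_nonpos hl)
  have hout : 0 < ∑ i ∈ Sᶜ, M (Pi.single j 1) i :=
    Finset.sum_pos' (fun _ hi => hM.nonneg (ne_of_mem_of_not_mem hj (Finset.mem_compl.1 hi)).symm)
      ⟨k, hk, hjk⟩
  exact (mul_pos ((mem_S j).1 hj) hout).ne'
    ((Finset.sum_eq_zero_iff_of_nonneg fun l _ => hterm l).1 hflow j (Finset.mem_univ j))

theorem forall_pos_or_forall_neg_of_mem_ker (hM : IsIrreducibleGenerator M) (hw : M w = 0)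
    (hw0 : w ≠ 0) : (∀ i, 0 < w i) ∨ ∀ i, w i < 0 := by
  obtain ⟨i, hi⟩ := Function.ne_iff.1 hw0
  rcases hi.lt_or_gt with hneg | hpos
  · have hneg_ker : M (-w) = 0 := by rw [map_neg, hw, neg_zero]
    exact .inr fun k => neg_pos.1 (hM.forall_pos_of_mem_ker hneg_ker (neg_pos.2 hneg) k)
  · exact .inl (hM.forall_pos_of_mem_ker hw hpos)

theorem ne_zero_of_mem_ker (hM : IsIrreducibleGenerator M) (hw : M w = 0) (hw0 : w ≠ 0) (i : ι) :
    w i ≠ 0 :=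
  (hM.forall_pos_or_forall_neg_of_mem_ker hw hw0).elim (fun h => (h i).ne') fun h => (h i).ne

lemma finrank_ker_le_one [Nonempty ι] (hM : IsIrreducibleGenerator M) :
    Module.finrank K (LinearMap.ker M) ≤ 1 := by
  obtain ⟨i⟩ := ‹Nonempty ι›
  let eval : LinearMap.ker M →ₗ[K] K := LinearMap.proj i ∘ₗ (LinearMap.ker M).subtype
  have eval_injective : Function.Injective eval := by
    refine (injective_iff_map_eq_zero eval).2 fun w hw => ?_
    by_contra hw0
    exact hM.ne_zero_of_mem_ker w.2 (by simpa using hw0) i hw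
  simpa using LinearMap.finrank_le_finrank_of_injective eval_injective

lemma range_eq_ker_sum_proj [Nonempty ι] (hM : IsIrreducibleGenerator M) :
    LinearMap.range M = LinearMap.ker (∑ i, LinearMap.proj i : (ι → K) →ₗ[K] K) := by
  refine Submodule.eq_of_le_of_finrank_le ?_ ?_
  · rintro _ ⟨w, rfl⟩
    simpa using hM.sum_apply w
  · have hrank := LinearMap.finrank_range_add_finrank_ker M
    rw [Module.finrank_fintype_fun_eq_card] at hrank
    have hker := hM.finrank_ker_le_one
    rw [finrank_ker_sum_proj]
    omega

theorem coe_range_eq [Nonempty ι] (hM : IsIrreducibleGenerator M) :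
    (LinearMap.range M : Set (ι → K)) = {v | ∑ i, v i = 0} := by
  rw [hM.range_eq_ker_sum_proj]
  ext v
  simp

theorem finrank_range [Nonempty ι] (hM : IsIrreducibleGenerator M) :
    Module.finrank K (LinearMap.range M) = Fintype.card ι - 1 := by
  rw [hM.range_eq_ker_sum_proj, finrank_ker_sum_proj]

end IsIrreducibleGenerator

end IrreducibleGenerator

section IntegralsOverMovingSets

open scoped symmDiff

variable {P T Y : Type*} [NormedAddCommGroup P] [NormedSpace ℝ P]

lemma aestronglyMeasurable_fderiv_of_ae_differentiableAt [FiniteDimensional ℝ P]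
    [MeasurableSpace T] {ν : Measure T} {φ : P → T → ℝ} {ψ : P}
    (hmeas : ∀ p, AEStronglyMeasurable (φ p) ν)
    (hdiff : ∀ᵐ a ∂ν, DifferentiableAt ℝ (fun p => φ p a) ψ) :
    AEStronglyMeasurable (fun a => fderiv ℝ (fun p => φ p a) ψ) ν := by
  have happly (v : P) : AEStronglyMeasurable (fun a => fderiv ℝ (fun p => φ p a) ψ v) ν := by
    refine aestronglyMeasurable_of_tendsto_ae atTop
      (f := fun (n : ℕ) a => (n : ℝ) • (φ (ψ + (n : ℝ)⁻¹ • v) a - φ ψ a))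
      (fun n => ((hmeas _).sub (hmeas ψ)).const_smul (n : ℝ)) ?_
    filter_upwards [hdiff] with a ha
    exact ha.hasFDerivAt.lim v (tendsto_norm_atTop_atTop.comp tendsto_natCast_atTop_atTop)
  let b := Module.finBasis ℝ P
  let coord j : P →L[ℝ] ℝ := (b.coord j).toContinuousLinearMap
  have hexpand (L : P →L[ℝ] ℝ) : L = ∑ j, L (b j) • coord j := by
    ext v
    calc L v = L (∑ j, b.repr v j • b j) := by rw [b.sum_repr]
      _ = (∑ j, L (b j) • coord j) v := by
        simp only [map_sum, map_smul, FunLike.coe_sum, Finset.sum_apply,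
          FunLike.coe_smul, Pi.smul_apply, smul_eq_mul, coord,
          LinearMap.coe_toContinuousLinearMap', Module.Basis.coord_apply, mul_comm]
  rw [funext fun a => hexpand (fderiv ℝ (fun p => φ p a) ψ)]
  exact Finset.aestronglyMeasurable_fun_sum _ fun j _ => (happly (b j)).smul_const (coord j)

lemma differentiableAt_integral_of_dominated_lipschitz [FiniteDimensional ℝ P]
    [MeasurableSpace T] {ν : Measure T} {φ : P → T → ℝ} {ψ : P} {bound : T → ℝ}
    (hmeas : ∀ p, AEStronglyMeasurable (φ p) ν) (hint : Integrable (φ ψ) ν)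
    (hbound : Integrable bound ν)
    (hlip : ∀ᶠ p in 𝓝 ψ, ∀ a, ‖φ p a - φ ψ a‖ ≤ bound a * ‖p - ψ‖)
    (hdiff : ∀ᵐ a ∂ν, DifferentiableAt ℝ (fun p => φ p a) ψ) :
    DifferentiableAt ℝ (fun p => ∫ a, φ p a ∂ν) ψ :=
  (hasFDerivAt_integral_of_dominated_loc_of_lip' hlip (fun p _ => hmeas p) hint
    (aestronglyMeasurable_fderiv_of_ae_differentiableAt hmeas hdiff)
    (Eventually.of_forall fun a _ hp => hp a) hbound
    (hdiff.mono fun _ ha => ha.hasFDerivAt)).2.differentiableAt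

lemma norm_setIntegral_sub_setIntegral_le [MeasurableSpace T] {ν : Measure T} {A B J : Set T}
    (hA : MeasurableSet A) (hB : MeasurableSet B) {h : T → ℝ} {C : ℝ} (hint : Integrable h ν)
    (hC : ∀ x, ‖h x‖ ≤ C) (hJ : ∀ x ∉ J, h x = 0) (hfin : ν (A ∆ B ∩ J) < ⊤) :
    ‖(∫ x in A, h x ∂ν) - ∫ x in B, h x ∂ν‖ ≤ C * ν.real (A ∆ B ∩ J) := by
  classical
  have hzero : ∀ x ∉ A ∆ B ∩ J, A.indicator h x - B.indicator h x = 0 := by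
    intro x hx
    by_cases hxJ : x ∈ J
    · have hAB : x ∈ A ↔ x ∈ B := by
        by_contra hne
        exact hx ⟨by grind, hxJ⟩
      simp [indicator_apply, hAB]
    · simp [indicator_apply, hJ x hxJ]
  have hle : ∀ x ∈ A ∆ B ∩ J, ‖A.indicator h x - B.indicator h x‖ ≤ C := by
    rintro x ⟨⟨hxA, hxB⟩ | ⟨hxB, hxA⟩, -⟩ <;> simpa [hxA, hxB] using hC x
  rw [← integral_indicator hA, ← integral_indicator hB,
    ← integral_sub (hint.indicator hA) (hint.indicator hB),
    ← setIntegral_eq_integral_of_forall_compl_eq_zero hzero]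
  exact norm_setIntegral_le_of_norm_le_const hfin hle

lemma hasCompactSupport_comp_prodMk [TopologicalSpace T] [R1Space T] [TopologicalSpace Y]
    {h : Y × T → ℝ} (hcs : HasCompactSupport h) (y : Y) :
    HasCompactSupport fun t => h (y, t) :=
  HasCompactSupport.intro (hcs.isCompact.image continuous_snd) fun t ht =>
    image_eq_zero_of_notMem_tsupport fun hyt => ht ⟨(y, t), hyt, rfl⟩

lemma norm_setIntegral_fiber_sub_le [TopologicalSpace Y] {h : Y × ℝ → ℝ} (hc : Continuous h)
    (hcs : HasCompactSupport h) {C : ℝ} (hC : ∀ x, ‖h x‖ ≤ C) {B : Set Y} {J : Set ℝ}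
    (hsupp : tsupport h ⊆ B ×ˢ J) {A A' : Set (Y × ℝ)} [MeasurableSpace Y]
    (hA : MeasurableSet A) (hA' : MeasurableSet A') {r : ℝ} (hr : 0 ≤ r)
    (hvol : ∀ y ∈ B, volume (Prod.mk y ⁻¹' A ∆ A' ∩ J) ≤ ENNReal.ofReal r) (y : Y) :
    ‖(∫ t in Prod.mk y ⁻¹' A, h (y, t)) - ∫ t in Prod.mk y ⁻¹' A', h (y, t)‖ ≤
      (Prod.fst '' tsupport h).indicator (fun _ => C * r) y := by
  by_cases hy : y ∈ Prod.fst '' tsupport h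
  · obtain ⟨x, hx, rfl⟩ := hy
    have hv := hvol x.1 (hsupp hx).1
    rw [indicator_of_mem (mem_image_of_mem _ hx)]
    refine (norm_setIntegral_sub_setIntegral_le (measurable_prodMk_left hA)
      (measurable_prodMk_left hA') (Continuous.integrable_of_hasCompactSupport (by fun_prop)
        (hasCompactSupport_comp_prodMk hcs x.1)) (fun t => hC _) (J := J) (fun t ht => ?_)
      (hv.trans_lt ENNReal.ofReal_lt_top)).trans ?_
    · exact image_eq_zero_of_notMem_tsupport fun h => ht (hsupp h).2
    · exact mul_le_mul_of_nonneg_left (ENNReal.toReal_le_of_le_ofReal hr hv)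
        ((norm_nonneg _).trans (hC x))
  · have hzero (t : ℝ) : h (y, t) = 0 :=
      image_eq_zero_of_notMem_tsupport fun h => hy ⟨_, h, rfl⟩
    simp [hzero, indicator_of_notMem hy]

/-- Differentiability at `ψ`, tested on the open set `U`, of a family of sets `S p` depending on a
parameter `p`: the integral over `S p` of every continuous function compactly supported in `U` is
differentiable in `p`. Restricting the test functions to `U` makes the notion local in `x`. -/
def WeaklyDifferentiableAt [TopologicalSpace T] [MeasurableSpace T] (ν : Measure T)
    (S : P → Set T) (U : Set T) (ψ : P) : Prop :=
  ∀ h : T → ℝ, Continuous h → HasCompactSupport h → tsupport h ⊆ U →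
    DifferentiableAt ℝ (fun p => ∫ x in S p, h x ∂ν) ψ

namespace WeaklyDifferentiableAt

variable [TopologicalSpace T] [MeasurableSpace T] {ν : Measure T} {S S' : P → Set T}
  {U V : Set T} {ψ : P}

lemma mono (hS : WeaklyDifferentiableAt ν S U ψ) (hVU : V ⊆ U) :
    WeaklyDifferentiableAt ν S V ψ :=
  fun h hc hcs hsupp => hS h hc hcs (hsupp.trans hVU)

lemma congr [OpensMeasurableSpace T] (hS : WeaklyDifferentiableAt ν S U ψ) (hU : IsOpen U)
    (hSS' : ∀ᶠ p in 𝓝 ψ, ∀ x ∈ U, x ∈ S p ↔ x ∈ S' p) : WeaklyDifferentiableAt ν S' U ψ := by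
  intro h hc hcs hsupp
  have hind : h = U.indicator h :=
    (indicator_eq_self.2 ((subset_tsupport h).trans hsupp)).symm
  refine (hS h hc hcs hsupp).congr_of_eventuallyEq ?_
  filter_upwards [hSS'] with p hp
  have hinter : S p ∩ U = S' p ∩ U := by grind
  rw [hind, setIntegral_indicator hU.measurableSet, setIntegral_indicator hU.measurableSet, hinter]

lemma exists_mem_nhds_congr [OpensMeasurableSpace T] {t : T}
    (hS : ∃ V ∈ 𝓝 t, WeaklyDifferentiableAt ν S V ψ)
    (hSS' : ∀ᶠ q in 𝓝 (ψ, t), q.2 ∈ S q.1 ↔ q.2 ∈ S' q.1) :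
    ∃ V ∈ 𝓝 t, WeaklyDifferentiableAt ν S' V ψ := by
  obtain ⟨V, hV, hSV⟩ := hS
  rw [nhds_prod_eq, eventually_prod_iff] at hSS'
  obtain ⟨A, hA, W, hW, hAW⟩ := hSS'
  obtain ⟨U, hUVW, hUo, htU⟩ := mem_nhds_iff.1 (inter_mem hV hW)
  refine ⟨U, hUo.mem_nhds htU, (hSV.mono fun x hx => (hUVW hx).1).congr hUo ?_⟩
  filter_upwards [hA] with p hp x hx using hAW hp (hUVW hx).2

lemma const (s : Set T) : WeaklyDifferentiableAt ν (fun _ : P => s) U ψ :=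
  fun _ _ _ _ => differentiableAt_const _

lemma of_locally [T2Space T] [LocallyCompactSpace T] [OpensMeasurableSpace T]
    [IsFiniteMeasureOnCompacts ν]
    (hloc : ∀ t ∈ U, ∃ V ∈ 𝓝 t, WeaklyDifferentiableAt ν S V ψ) :
    WeaklyDifferentiableAt ν S U ψ := by
  intro h hc hcs hsupp
  choose! V hVt hV using fun t ht => hloc t (hsupp ht)
  obtain ⟨s, hs, hcov⟩ := hcs.isCompact.elim_nhds_subcover (fun t => interior (V t))
    fun t ht => interior_mem_nhds.2 (hVt t ht)
  obtain ⟨f, hfV, hf1, -, -⟩ := exists_continuous_sum_one_of_isOpen_isCompact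
    (s := fun i => interior (V (s.equivFin.symm i))) (fun _ => isOpen_interior)
    hcs.isCompact fun x hx => by
      obtain ⟨t, ht, hxt⟩ := mem_iUnion₂.1 (hcov hx)
      exact mem_iUnion.2 ⟨s.equivFin ⟨t, ht⟩, by simpa using hxt⟩
  have hsum (x : T) : h x = ∑ i, f i x * h x := by
    by_cases hx : x ∈ tsupport h
    · have hone : ∑ i, f i x = 1 := by simpa using hf1 hx
      rw [← Finset.sum_mul, hone, one_mul]
    · simp [image_eq_zero_of_notMem_tsupport hx]
  have hcs' i : HasCompactSupport fun x => f i x * h x := hcs.mul_left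
  have hc' i : Continuous fun x => f i x * h x := (f i).continuous.mul hc
  have hsplit : (fun p => ∫ x in S p, h x ∂ν) = fun p => ∑ i, ∫ x in S p, f i x * h x ∂ν := by
    funext p
    rw [← integral_finsetSum _ fun i _ =>
      ((hc' i).integrable_of_hasCompactSupport (hcs' i)).integrableOn]
    exact integral_congr_ae (Eventually.of_forall hsum)
  rw [hsplit]
  refine DifferentiableAt.fun_sum fun i _ =>
    hV _ (hs _ (s.equivFin.symm i).2) _ (hc' i) (hcs' i) ?_
  exact (closure_mono (Function.support_mul_subset_left _ _)).trans
    ((hfV i).trans interior_subset)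

lemma smul_map {T' : Type*} [TopologicalSpace T'] [MeasurableSpace T'] [BorelSpace T']
    [BorelSpace T] {S : P → Set T'} {U : Set T'} (Φ : T ≃ₜ T') (c : NNReal)
    (hS : WeaklyDifferentiableAt ν (fun p => Φ ⁻¹' S p) (Φ ⁻¹' U) ψ) :
    WeaklyDifferentiableAt (c • ν.map Φ) S U ψ := by
  intro h hc hcs hsupp
  have hpull := hS (h ∘ Φ) (hc.comp Φ.continuous) (hcs.comp_homeomorph Φ)
    ((tsupport_comp_eq_preimage h Φ).trans_subset (preimage_mono hsupp))
  have hchange (p : P) :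
      ∫ x in S p, h x ∂(c • ν.map Φ) = (c : ℝ) * ∫ x in Φ ⁻¹' S p, (h ∘ Φ) x ∂ν := by
    rw [Measure.restrict_smul, integral_smul_nnreal_measure,
      Φ.measurableEmbedding.setIntegral_map]
    rfl
  simp_rw [hchange]
  exact hpull.const_mul (c : ℝ)

theorem of_fibers [FiniteDimensional ℝ P] [TopologicalSpace Y] [T2Space Y]
    [MeasurableSpace Y] [BorelSpace Y] {ν : Measure Y} [SFinite ν]
    [IsFiniteMeasureOnCompacts ν] {S : P → Set (Y × ℝ)} (hS : ∀ p, MeasurableSet (S p))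
    {B : Set Y} {J : Set ℝ} {K : ℝ} (hK : 0 ≤ K)
    (hlip : ∀ᶠ p in 𝓝 ψ, ∀ y ∈ B,
      volume (Prod.mk y ⁻¹' S p ∆ S ψ ∩ J) ≤ ENNReal.ofReal (K * ‖p - ψ‖))
    (hfib : ∀ᵐ y ∂ν, y ∈ B → WeaklyDifferentiableAt volume (fun p => Prod.mk y ⁻¹' S p) J ψ) :
    WeaklyDifferentiableAt (ν.prod volume) S (B ×ˢ J) ψ := by
  classical
  intro h hc hcs hsupp
  obtain ⟨C, hC⟩ := hcs.exists_bound_of_continuous hc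
  have hint : Integrable h (ν.prod volume) := hc.integrable_of_hasCompactSupport hcs
  have hproj : IsCompact (Prod.fst '' tsupport h) := hcs.isCompact.image continuous_fst
  have hslice (p : P) (y : Y) :
      ∫ t, (S p).indicator h (y, t) = ∫ t in Prod.mk y ⁻¹' S p, h (y, t) := by
    rw [← integral_indicator (measurable_prodMk_left (hS p))]
    rfl
  have hfubini (p : P) : ∫ x in S p, h x ∂(ν.prod volume) =
      ∫ y, (∫ t in Prod.mk y ⁻¹' S p, h (y, t)) ∂ν := by
    rw [← integral_indicator (hS p), integral_prod _ (hint.indicator (hS p))]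
    simp_rw [hslice]
  have hinner (p : P) : Integrable (fun y => ∫ t in Prod.mk y ⁻¹' S p, h (y, t)) ν := by
    simpa only [hslice] using (hint.indicator (hS p)).integral_prod_left
  simp_rw [hfubini]
  refine differentiableAt_integral_of_dominated_lipschitz
    (bound := (Prod.fst '' tsupport h).indicator fun _ => C * K)
    (fun p => (hinner p).aestronglyMeasurable) (hinner ψ)
    ((integrableOn_const hproj.measure_lt_top.ne).integrable_indicator hproj.measurableSet) ?_ ?_
  · filter_upwards [hlip] with p hp y
    refine (norm_setIntegral_fiber_sub_le hc hcs hC hsupp (hS p) (hS ψ) (by positivity) hp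
      y).trans_eq ?_
    simp only [indicator_apply, ite_mul, zero_mul, mul_assoc]
  · filter_upwards [hfib] with y hy
    by_cases hyB : y ∈ B
    · refine hy hyB _ (by fun_prop) (hasCompactSupport_comp_prodMk hcs y) fun t ht => ?_
      exact (hsupp (tsupport_comp_subset_preimage h (f := Prod.mk y) (by fun_prop) ht)).2
    · have hzero (t : ℝ) : h (y, t) = 0 :=
        image_eq_zero_of_notMem_tsupport fun h => hyB (hsupp h).1
      simp [hzero]

end WeaklyDifferentiableAt

end IntegralsOverMovingSets

section TransversalZeroSets

lemma sign_eq_sign_of_abs_sub_lt {a b : ℝ} (h : b ≠ 0 → |a - b| < |b|) (h0 : b = 0 → a = 0) :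
    SignType.sign a = SignType.sign b := by
  rcases lt_trichotomy b 0 with hb | hb | hb
  · have := h hb.ne
    rw [abs_of_neg hb, abs_lt] at this
    rw [sign_neg hb, sign_neg (by linarith)]
  · rw [h0 hb, hb]
  · have := h hb.ne'
    rw [abs_of_pos hb, abs_lt] at this
    rw [sign_pos hb, sign_pos (by linarith)]

lemma exists_sign_eq_sign_mul_sign_sub {Q : Type*} [NormedAddCommGroup Q] [NormedSpace ℝ Q]
    [CompleteSpace Q] {f : Q × ℝ → ℝ} {a : Q × ℝ} (hf : ContDiffAt ℝ 1 f a) (hfa : f a = 0)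
    (hslope : fderiv ℝ f a (0, 1) ≠ 0) :
    ∃ τ : Q → ℝ, ContDiffAt ℝ 1 τ a.1 ∧ τ a.1 = a.2 ∧ ∀ᶠ x in 𝓝 a,
      SignType.sign (f x) =
        SignType.sign (fderiv ℝ f a (0, 1)) * SignType.sign (x.2 - τ x.1) := by
  set s := fderiv ℝ f a (0, 1)
  have hinv : (fderiv ℝ f a ∘L .inr ℝ Q ℝ).IsInvertible := by
    refine ⟨ContinuousLinearEquiv.smulLeft (Units.mk0 s hslope), ?_⟩
    ext
    simp [Units.smul_def, s]
  have hτ := hf.contDiffAt_implicitFunction one_ne_zero hinv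
  have hτa := hf.implicitFunction_apply_self one_ne_zero hinv
  have hzero := hf.eventually_apply_implicitFunction one_ne_zero hinv
  set τ := hf.implicitFunction one_ne_zero hinv
  refine ⟨τ, hτ, hτa, ?_⟩
  -- Strict differentiability compares `f x` with `f (x.1, τ x.1) = 0`.
  have hgraph : Tendsto (fun x : Q × ℝ => (x, (x.1, τ x.1))) (𝓝 a) (𝓝 (a, a)) := by
    have hτfst : ContinuousAt (fun x : Q × ℝ => τ x.1) a := hτ.continuousAt.comp' continuousAt_fst
    have hcont := continuousAt_id.prodMk (continuousAt_fst.prodMk hτfst)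
    simpa only [ContinuousAt, hτa, id_eq] using hcont
  have hsmall := ((hf.hasStrictFDerivAt one_ne_zero).isLittleO.comp_tendsto hgraph).def
    (half_pos (abs_pos.2 hslope))
  filter_upwards [hsmall, continuous_fst.continuousAt.eventually hzero] with x hx hx0
  have hlin : fderiv ℝ f a (x - (x.1, τ x.1)) = s * (x.2 - τ x.1) := by
    have : x - (x.1, τ x.1) = (x.2 - τ x.1) • ((0, 1) : Q × ℝ) := by ext <;> simp
    rw [this, map_smul, smul_eq_mul, mul_comm]
  have hnorm : ‖x - (x.1, τ x.1)‖ = |x.2 - τ x.1| := by simp [Prod.norm_def]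
  simp only [Function.comp_apply, hlin, hnorm, hx0, hfa, sub_zero, Real.norm_eq_abs] at hx
  rw [← sign_mul]
  refine sign_eq_sign_of_abs_sub_lt (fun hne => hx.trans_lt ?_) fun h0 => ?_
  · have := abs_pos.2 hne
    rw [abs_mul] at this ⊢
    linarith
  · rw [h0, sub_zero, (mul_eq_zero_iff_left hslope).1 h0, abs_zero, mul_zero] at hx
    exact abs_nonpos_iff.1 hx

lemma eventually_zero_le_iff_of_ne_zero {Q : Type*} [TopologicalSpace Q] {f : Q → ℝ} {a : Q}
    (hf : ContinuousAt f a) (ha : f a ≠ 0) : ∀ᶠ q in 𝓝 a, 0 ≤ f q ↔ 0 ≤ f a := by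
  rcases ha.lt_or_gt with hneg | hpos
  · filter_upwards [hf.eventually (gt_mem_nhds hneg)] with q hq
    exact iff_of_false hq.not_ge hneg.not_ge
  · filter_upwards [hf.eventually (lt_mem_nhds hpos)] with q hq
    exact iff_of_true hq.le hpos.le

lemma exists_volume_sign_change_le_dist {Q : Type*} [NormedAddCommGroup Q] [NormedSpace ℝ Q]
    [CompleteSpace Q] {f : Q × ℝ → ℝ} {a : Q × ℝ} (hf : ContDiffAt ℝ 1 f a)
    (hslope : f a = 0 → fderiv ℝ f a (0, 1) ≠ 0) :
    ∃ K : NNReal, ∃ J ∈ 𝓝 a.2, ∃ W ∈ 𝓝 a.1, ∀ q ∈ W, ∀ q' ∈ W,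
      volume {t ∈ J | ¬(0 ≤ f (q, t) ↔ 0 ≤ f (q', t))} ≤ ENNReal.ofReal (K * dist q q') := by
  by_cases ha : f a = 0
  · obtain ⟨τ, hτ, -, hsign⟩ := exists_sign_eq_sign_mul_sign_sub hf ha (hslope ha)
    obtain ⟨K, W, hW, hlip⟩ := hτ.exists_lipschitzOnWith
    obtain ⟨A, hA, J, hJ, hAJ⟩ := mem_nhds_prod_iff.1 hsign
    refine ⟨K, J, hJ, A ∩ W, inter_mem hA hW, fun q hq q' hq' => ?_⟩
    have hbetween : {t ∈ J | ¬(0 ≤ f (q, t) ↔ 0 ≤ f (q', t))} ⊆ uIcc (τ q') (τ q) := by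
      rintro t ⟨ht, hne⟩
      contrapose! hne
      have hsame : SignType.sign (t - τ q) = SignType.sign (t - τ q') := by
        rw [uIcc, mem_Icc, not_and_or, not_le, not_le, lt_inf_iff, sup_lt_iff] at hne
        rcases hne with ⟨h', h⟩ | ⟨h', h⟩
        · rw [sign_neg (sub_neg.2 h), sign_neg (sub_neg.2 h')]
        · rw [sign_pos (sub_pos.2 h), sign_pos (sub_pos.2 h')]
      have hq_sign := hAJ (mk_mem_prod hq.1 ht)
      have hq'_sign := hAJ (mk_mem_prod hq'.1 ht)
      simp only [mem_ofPred_eq] at hq_sign hq'_sign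
      rw [← sign_nonneg_iff, hq_sign, hsame, ← hq'_sign, sign_nonneg_iff]
    refine (measure_mono hbetween).trans ?_
    rw [Real.volume_interval, ← Real.dist_eq]
    exact ENNReal.ofReal_le_ofReal (hlip.dist_le_mul q hq.2 q' hq'.2)
  · obtain ⟨A, hA, J, hJ, hAJ⟩ :=
      mem_nhds_prod_iff.1 (eventually_zero_le_iff_of_ne_zero hf.continuousAt ha)
    refine ⟨0, J, hJ, A, hA, fun q hq q' hq' => ?_⟩
    have hempty : {t ∈ J | ¬(0 ≤ f (q, t) ↔ 0 ≤ f (q', t))} = ∅ :=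
      eq_empty_of_forall_notMem fun t ht =>
        ht.2 ((hAJ (mk_mem_prod hq ht.1)).trans (hAJ (mk_mem_prod hq' ht.1)).symm)
    rw [hempty, measure_empty]
    exact zero_le

lemma differentiable_setIntegral_Iic {h : ℝ → ℝ} (hc : Continuous h) (hint : Integrable h) :
    Differentiable ℝ fun b => ∫ t in Iic b, h t := by
  have hsplit : (fun b => ∫ t in Iic b, h t) =
      fun b => (∫ t in Iic 0, h t) + ∫ t in (0 : ℝ)..b, h t := by
    funext b
    rw [← intervalIntegral.integral_Iic_sub_Iic hint.integrableOn hint.integrableOn]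
    ring
  rw [hsplit]
  exact fun b => (hc.integral_hasStrictDerivAt 0 b).hasDerivAt.differentiableAt.const_add _

lemma differentiable_setIntegral_Ici {h : ℝ → ℝ} (hc : Continuous h) (hint : Integrable h) :
    Differentiable ℝ fun b => ∫ t in Ici b, h t := by
  have hsplit : (fun b => ∫ t in Ici b, h t) = fun b => (∫ t, h t) - ∫ t in Iic b, h t := by
    funext b
    rw [integral_Ici_eq_integral_Ioi, ← integral_add_compl measurableSet_Iic hint, compl_Iic]
    ring
  rw [hsplit]
  exact (differentiable_setIntegral_Iic hc hint).const_sub _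

variable {P Y ι : Type*}

/-- The subset of `O` cut out by the constraints `0 ≤ f l (p, ·)`, which move with the parameter
`p`. A Laguerre cell is of this form, with the value gaps to the other sites as constraints. -/
def constraintSet {E : Type*} (O : Set E) (f : ι → P × E → ℝ) (p : P) : Set E :=
  {x ∈ O | ∀ l, 0 ≤ f l (p, x)}

lemma measurableSet_constraintSet {E : Type*} [TopologicalSpace P] [TopologicalSpace E]
    [MeasurableSpace E] [OpensMeasurableSpace E] [Countable ι] {O : Set E} (hO : IsOpen O)
    {f : ι → P × E → ℝ}
    (hf : ∀ l, ContinuousOn (f l) (univ ×ˢ O)) (p : P) : MeasurableSet (constraintSet O f p) := by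
  have hsplit : constraintSet O f p = O \ ⋃ l, O ∩ (fun x => f l (p, x)) ⁻¹' Iio 0 := by
    ext x
    simp only [constraintSet, mem_ofPred_eq, Set.mem_sdiff, mem_iUnion, mem_inter_iff, mem_preimage,
      mem_Iio, not_exists, not_and, not_lt]
    grind
  rw [hsplit]
  refine hO.measurableSet.diff (MeasurableSet.iUnion fun l => IsOpen.measurableSet ?_)
  refine ContinuousOn.isOpen_inter_preimage ?_ hO isOpen_Iio
  exact (hf l).comp (by fun_prop) fun x hx => ⟨mem_univ p, hx⟩

variable [NormedAddCommGroup P] [NormedSpace ℝ P]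

lemma exists_weaklyDifferentiableAt_superlevel [CompleteSpace P] {f : P × ℝ → ℝ} {ψ : P} {t₀ : ℝ}
    (hf : ContDiffAt ℝ 1 f (ψ, t₀)) (hf0 : f (ψ, t₀) = 0)
    (hslope : fderiv ℝ f (ψ, t₀) (0, 1) ≠ 0) :
    ∃ V ∈ 𝓝 t₀, WeaklyDifferentiableAt volume (fun p => {t | 0 ≤ f (p, t)}) V ψ := by
  obtain ⟨τ, hτ, -, hsign⟩ := exists_sign_eq_sign_mul_sign_sub hf hf0 hslope
  have hτd : DifferentiableAt ℝ τ ψ := hτ.differentiableAt one_ne_zero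
  rcases hslope.lt_or_gt with hneg | hpos
  · refine WeaklyDifferentiableAt.exists_mem_nhds_congr (S := fun p => Iic (τ p))
      ⟨univ, univ_mem, fun h hc hcs _ => ?_⟩ ?_
    · exact (differentiable_setIntegral_Iic hc (hc.integrable_of_hasCompactSupport hcs)
        (τ ψ)).comp ψ hτd
    · filter_upwards [hsign] with x hx
      rw [sign_neg hneg] at hx
      change x.2 ≤ τ x.1 ↔ 0 ≤ f x
      rw [← sign_nonneg_iff, hx, neg_one_mul, ← Left.sign_neg, sign_nonneg_iff, neg_nonneg,
        sub_nonpos]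
  · refine WeaklyDifferentiableAt.exists_mem_nhds_congr (S := fun p => Ici (τ p))
      ⟨univ, univ_mem, fun h hc hcs _ => ?_⟩ ?_
    · exact (differentiable_setIntegral_Ici hc (hc.integrable_of_hasCompactSupport hcs)
        (τ ψ)).comp ψ hτd
    · filter_upwards [hsign] with x hx
      rw [sign_pos hpos, one_mul] at hx
      change τ x.1 ≤ x.2 ↔ 0 ≤ f x
      rw [← sign_nonneg_iff, hx, sign_nonneg_iff, sub_nonneg]

lemma exists_weaklyDifferentiableAt_of_subsingleton_zeros [CompleteSpace P] [Finite ι]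
    {f : ι → P × ℝ → ℝ} {ψ : P} {t₀ : ℝ} (hf : ∀ l, ContDiffAt ℝ 1 (f l) (ψ, t₀))
    (hslope : ∀ l, f l (ψ, t₀) = 0 → fderiv ℝ (f l) (ψ, t₀) (0, 1) ≠ 0)
    (hzeros : {l | f l (ψ, t₀) = 0}.Subsingleton) :
    ∃ V ∈ 𝓝 t₀, WeaklyDifferentiableAt volume (fun p => {t | ∀ l, 0 ≤ f l (p, t)}) V ψ := by
  have hstable : ∀ᶠ q in 𝓝 (ψ, t₀), ∀ l, f l (ψ, t₀) ≠ 0 → (0 ≤ f l q ↔ 0 ≤ f l (ψ, t₀)) :=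
    eventually_all.2 fun l => eventually_imp_distrib_left.2
      (eventually_zero_le_iff_of_ne_zero (hf l).continuousAt)
  by_cases hneg : ∃ l, f l (ψ, t₀) < 0
  · obtain ⟨l, hl⟩ := hneg
    refine WeaklyDifferentiableAt.exists_mem_nhds_congr
      ⟨univ, univ_mem, WeaklyDifferentiableAt.const ∅⟩ ?_
    filter_upwards [hstable] with q hq
    exact iff_of_false (notMem_empty _) fun h => hl.not_ge ((hq l hl.ne).1 (h l))
  push Not at hneg
  by_cases hzero : ∃ l, f l (ψ, t₀) = 0
  · obtain ⟨l, hl⟩ := hzero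
    refine WeaklyDifferentiableAt.exists_mem_nhds_congr
      (exists_weaklyDifferentiableAt_superlevel (hf l) hl (hslope l hl)) ?_
    filter_upwards [hstable] with q hq
    refine ⟨fun h k => ?_, fun h => h l⟩
    by_cases hk : f k (ψ, t₀) = 0
    · exact hzeros hk hl ▸ h
    · exact (hq k hk).2 (hneg k)
  · push Not at hzero
    refine WeaklyDifferentiableAt.exists_mem_nhds_congr
      ⟨univ, univ_mem, WeaklyDifferentiableAt.const univ⟩ ?_
    filter_upwards [hstable] with q hq
    exact iff_of_true (mem_univ _) fun l => (hq l (hzero l)).2 (hneg l)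

variable [NormedAddCommGroup Y] [NormedSpace ℝ Y]

lemma exists_volume_fiber_sign_change_le [CompleteSpace P] [CompleteSpace Y]
    {f : P × Y × ℝ → ℝ} {ψ : P} {z : Y × ℝ} (hf : ContDiffAt ℝ 1 f (ψ, z))
    (hslope : f (ψ, z) = 0 → fderiv ℝ f (ψ, z) (0, 0, 1) ≠ 0) :
    ∃ K : NNReal, ∃ J ∈ 𝓝 z.2, ∀ᶠ q : P × Y in 𝓝 (ψ, z.1),
      volume {t ∈ J | ¬(0 ≤ f (q.1, q.2, t) ↔ 0 ≤ f (ψ, q.2, t))} ≤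
        ENNReal.ofReal (K * ‖q.1 - ψ‖) := by
  let assoc : ((P × Y) × ℝ) ≃L[ℝ] P × Y × ℝ := ContinuousLinearEquiv.prodAssoc ℝ P Y ℝ
  have hfderiv : fderiv ℝ (f ∘ assoc) ((ψ, z.1), z.2) (0, 1) = fderiv ℝ f (ψ, z) (0, 0, 1) := by
    rw [assoc.comp_right_fderiv]
    rfl
  obtain ⟨K, J, hJ, W, hW, hK⟩ := exists_volume_sign_change_le_dist (f := f ∘ assoc)
    (a := ((ψ, z.1), z.2)) (ContDiffAt.comp _ hf assoc.contDiff.contDiffAt)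
    fun h0 => hfderiv.trans_ne (hslope h0)
  have hfix : Tendsto (fun q : P × Y => (ψ, q.2)) (𝓝 (ψ, z.1)) (𝓝 (ψ, z.1)) :=
    (continuous_const.prodMk continuous_snd).tendsto' _ _ rfl
  refine ⟨K, J, hJ, ?_⟩
  filter_upwards [hW, hfix hW] with q hq hq'
  have hdist : dist q (ψ, q.2) = ‖q.1 - ψ‖ := by
    rw [Prod.dist_eq, dist_self, max_eq_left dist_nonneg, dist_eq_norm]
  exact hdist ▸ hK q hq _ hq'

end TransversalZeroSets

section ConstraintSets

variable {P Y ι : Type*} [NormedAddCommGroup P] [NormedSpace ℝ P] [NormedAddCommGroup Y]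
  [NormedSpace ℝ Y]

lemma eventually_slope_ne_zero {Q : Type*} [NormedAddCommGroup Q] [NormedSpace ℝ Q] {f : Q → ℝ}
    {a v : Q} (hf : ContDiffAt ℝ 1 f a) (hslope : f a = 0 → fderiv ℝ f a v ≠ 0) :
    ∀ᶠ x in 𝓝 a, f x = 0 → fderiv ℝ f x v ≠ 0 := by
  by_cases ha : f a = 0
  · have hcont : ContinuousAt (fun x => fderiv ℝ f x v) a :=
      (hf.continuousAt_fderiv one_ne_zero).clm_apply continuousAt_const
    filter_upwards [hcont.eventually_ne (hslope ha)] with x hx _ using hx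
  · filter_upwards [hf.continuousAt.eventually_ne ha] with x hx h0 using absurd h0 hx

lemma exists_volume_fiber_symmDiff_le [CompleteSpace P] [CompleteSpace Y] [Finite ι]
    {f : ι → P × Y × ℝ → ℝ} {O : Set (Y × ℝ)} {ψ : P} {z : Y × ℝ}
    (hf : ∀ l, ContDiffAt ℝ 1 (f l) (ψ, z))
    (hslope : ∀ l, f l (ψ, z) = 0 → fderiv ℝ (f l) (ψ, z) (0, 0, 1) ≠ 0) :
    ∃ K : NNReal, ∃ J ∈ 𝓝 z.2, ∀ᶠ q : P × Y in 𝓝 (ψ, z.1),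
      volume (Prod.mk q.2 ⁻¹' symmDiff (constraintSet O f q.1) (constraintSet O f ψ) ∩ J) ≤
        ENNReal.ofReal (K * ‖q.1 - ψ‖) := by
  have : Fintype ι := Fintype.ofFinite ι
  choose K J hJ hK using fun l => exists_volume_fiber_sign_change_le (hf l) (hslope l)
  refine ⟨∑ l, K l, ⋂ l, J l, iInter_mem.2 hJ, ?_⟩
  filter_upwards [eventually_all.2 hK] with q hq
  have hsub : Prod.mk q.2 ⁻¹' symmDiff (constraintSet O f q.1) (constraintSet O f ψ) ∩ ⋂ l, J l ⊆
      ⋃ l, {t ∈ J l | ¬(0 ≤ f l (q.1, q.2, t) ↔ 0 ≤ f l (ψ, q.2, t))} := by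
    rintro t ⟨ht, htJ⟩
    simp only [mem_preimage, Set.mem_symmDiff, constraintSet, mem_ofPred_eq] at ht
    simp only [mem_iUnion, mem_ofPred_eq]
    have htJ := mem_iInter.1 htJ
    by_contra! hcon
    grind
  calc _ ≤ ∑ l, volume {t ∈ J l | ¬(0 ≤ f l (q.1, q.2, t) ↔ 0 ≤ f l (ψ, q.2, t))} :=
        (measure_mono hsub).trans (measure_iUnion_fintype_le _ _)
    _ ≤ ∑ l, ENNReal.ofReal (K l * ‖q.1 - ψ‖) := Finset.sum_le_sum fun l _ => hq l
    _ = ENNReal.ofReal (((∑ l, K l : NNReal) : ℝ) * ‖q.1 - ψ‖) := by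
      rw [← ENNReal.ofReal_sum_of_nonneg fun l _ => by positivity, NNReal.coe_sum, Finset.sum_mul]

lemma weaklyDifferentiableAt_constraintSet_fiber [CompleteSpace P] [Finite ι]
    {f : ι → P × Y × ℝ → ℝ} {O : Set (Y × ℝ)} (hO : IsOpen O) {ψ : P} {y : Y} {J : Set ℝ}
    (hJO : ∀ t ∈ J, (y, t) ∈ O) (hf : ∀ l, ∀ t ∈ J, ContDiffAt ℝ 1 (f l) (ψ, y, t))
    (hslope : ∀ l, ∀ t ∈ J, f l (ψ, y, t) = 0 → fderiv ℝ (f l) (ψ, y, t) (0, 0, 1) ≠ 0)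
    (hzeros : ∀ t ∈ J, {l | f l (ψ, y, t) = 0}.Subsingleton) :
    WeaklyDifferentiableAt volume (fun p => Prod.mk y ⁻¹' constraintSet O f p) J ψ := by
  refine .of_locally fun t ht => WeaklyDifferentiableAt.exists_mem_nhds_congr
    (exists_weaklyDifferentiableAt_of_subsingleton_zeros (f := fun l q => f l (q.1, y, q.2))
      (fun l => (hf l t ht).comp (ψ, t) (by fun_prop)) (fun l hl => ?_) (hzeros t ht)) ?_
  · have hslice : HasFDerivAt (fun q : P × ℝ => (q.1, y, q.2))
        ((ContinuousLinearMap.fst ℝ P ℝ).prod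
          ((0 : P × ℝ →L[ℝ] Y).prod (ContinuousLinearMap.snd ℝ P ℝ))) (ψ, t) :=
      hasFDerivAt_fst.prodMk ((hasFDerivAt_const y _).prodMk hasFDerivAt_snd)
    have hcomp := ((hf l t ht).differentiableAt one_ne_zero).hasFDerivAt.comp (ψ, t) hslice
    exact (DFunLike.congr_fun hcomp.fderiv (0, 1)).trans_ne (hslope l t ht hl)
  · have hmem : Continuous fun q : P × ℝ => (y, q.2) := by fun_prop
    filter_upwards [hmem.continuousAt.eventually (hO.mem_nhds (hJO t ht))] with q hq
    exact ⟨fun h => ⟨hq, h⟩, fun h => h.2⟩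

theorem exists_weaklyDifferentiableAt_constraintSet_prod [FiniteDimensional ℝ P]
    [FiniteDimensional ℝ Y] [MeasurableSpace Y] [BorelSpace Y] {ν : Measure Y} [SFinite ν]
    [IsFiniteMeasureOnCompacts ν] [Finite ι] {f : ι → P × Y × ℝ → ℝ} {O : Set (Y × ℝ)}
    (hO : IsOpen O) (hf : ∀ l, ContDiffOn ℝ 1 (f l) (univ ×ˢ O)) {ψ : P} {z : Y × ℝ} (hz : z ∈ O)
    (hslope : ∀ l, f l (ψ, z) = 0 → fderiv ℝ (f l) (ψ, z) (0, 0, 1) ≠ 0)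
    (hzeros : ∀ᵐ y ∂ν, ∀ t, (y, t) ∈ O → {l | f l (ψ, y, t) = 0}.Subsingleton) :
    ∃ V ∈ 𝓝 z, WeaklyDifferentiableAt (ν.prod volume) (constraintSet O f) V ψ := by
  have : CompleteSpace P := FiniteDimensional.complete ℝ P
  have : CompleteSpace Y := FiniteDimensional.complete ℝ Y
  have : ProperSpace Y := FiniteDimensional.proper ℝ Y
  have hfat (l : ι) (x : Y × ℝ) (hx : x ∈ O) : ContDiffAt ℝ 1 (f l) (ψ, x) :=
    (hf l).contDiffAt ((isOpen_univ.prod hO).mem_nhds ⟨mem_univ ψ, hx⟩)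
  obtain ⟨K, J, hJ, hK⟩ := exists_volume_fiber_symmDiff_le (O := O) (fun l => hfat l z hz) hslope
  rw [nhds_prod_eq, eventually_prod_iff] at hK
  obtain ⟨A, hA, B, hB, hAB⟩ := hK
  have hnear : ∀ᶠ x in 𝓝 z, x ∈ O ∧ ∀ l, f l (ψ, x) = 0 → fderiv ℝ (f l) (ψ, x) (0, 0, 1) ≠ 0 := by
    refine (hO.eventually_mem hz).and (eventually_all.2 fun l => ?_)
    exact (Continuous.prodMk_right ψ).continuousAt.eventually
      (eventually_slope_ne_zero (hfat l z hz) (hslope l))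
  obtain ⟨B', hB', J', hJ', hBJ'⟩ := mem_nhds_prod_iff.1 hnear
  refine ⟨({y | B y} ∩ B') ×ˢ (J ∩ J'), prod_mem_nhds (inter_mem hB hB') (inter_mem hJ hJ'), ?_⟩
  refine .of_fibers (measurableSet_constraintSet hO fun l => (hf l).continuousOn) K.2 ?_ ?_
  · filter_upwards [hA] with p hp y hy
    exact (measure_mono (inter_subset_inter_right _ inter_subset_left)).trans (hAB hp hy.1)
  · filter_upwards [hzeros] with y hy hyB
    have hbox (t : ℝ) (ht : t ∈ J ∩ J') := hBJ' (mk_mem_prod hyB.2 ht.2)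
    exact weaklyDifferentiableAt_constraintSet_fiber hO (fun t ht => (hbox t ht).1)
      (fun l t ht => hfat l _ (hbox t ht).1) (fun l t ht => (hbox t ht).2 l)
      fun t ht => hy t (hbox t ht).1

end ConstraintSets

section LinearCharts

variable {E : Type*} [NormedAddCommGroup E] [NormedSpace ℝ E] {n : ℕ}

lemma exists_continuousLinearEquiv_prod_real_apply_eq [FiniteDimensional ℝ E]
    (hn : Module.finrank ℝ E = n + 1) {e : E} (he : e ≠ 0) :
    ∃ Φ : ((Fin n → ℝ) × ℝ) ≃L[ℝ] E, Φ (0, 1) = e := by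
  let Φ₀ : ((Fin n → ℝ) × ℝ) ≃L[ℝ] E := ContinuousLinearEquiv.ofFinrankEq (by simp [hn])
  obtain ⟨A, hA⟩ := SeparatingDual.exists_continuousLinearEquiv_apply_eq (R := ℝ)
    (Φ₀.map_ne_zero_iff.2 (by simp : ((0, 1) : (Fin n → ℝ) × ℝ) ≠ 0)) he
  exact ⟨Φ₀.trans A, hA⟩

lemma exists_eq_smul_map_volume_prod [MeasurableSpace E] [BorelSpace E] (μ : Measure E)
    [μ.IsAddHaarMeasure] (Φ : ((Fin n → ℝ) × ℝ) ≃L[ℝ] E) :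
    ∃ c : NNReal, c ≠ 0 ∧ μ = c • (volume.prod volume).map Φ := by
  have : FiniteDimensional ℝ E := Φ.toLinearEquiv.finiteDimensional
  have := Φ.isAddHaarMeasure_map (volume.prod volume)
  exact ⟨μ.addHaarScalarFactor ((volume.prod volume).map Φ),
    (Measure.addHaarScalarFactor_pos_of_isAddHaarMeasure _ _).ne',
    Measure.isAddLeftInvariant_eq_smul _ _⟩

lemma ae_forall_notMem_of_hausdorffMeasure_eq_zero [MeasurableSpace E] [BorelSpace E]
    (Φ : ((Fin n → ℝ) × ℝ) ≃L[ℝ] E) {Z : Set E} (hZ : μH[(n : ℝ)] Z = 0) :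
    ∀ᵐ y : Fin n → ℝ, ∀ t, Φ (y, t) ∉ Z := by
  let proj : E →L[ℝ] (Fin n → ℝ) := (ContinuousLinearMap.fst ℝ (Fin n → ℝ) ℝ) ∘L Φ.symm
  have himage := proj.lipschitz.hausdorffMeasure_image_le (Nat.cast_nonneg n) Z
  have hvol : (μH[(n : ℝ)] : Measure (Fin n → ℝ)) = volume := by
    simpa using hausdorffMeasure_pi_real (ι := Fin n)
  rw [hZ, mul_zero, nonpos_iff_eq_zero, hvol] at himage
  refine measure_mono_null (fun y hy => ?_) himage
  rw [mem_compl_iff, mem_ofPred_eq] at hy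
  push Not at hy
  obtain ⟨t, ht⟩ := hy
  exact ⟨Φ (y, t), ht, by simp [proj]⟩

lemma exists_ne_zero_forall_apply_ne_zero [Nontrivial E] {ι : Type*} [Finite ι] {L : ι → E →L[ℝ] ℝ}
    (hL : ∀ l, ∃ v, L l v ≠ 0) : ∃ e ≠ 0, ∀ l, L l e ≠ 0 := by
  rcases isEmpty_or_nonempty ι with hι | ⟨⟨l⟩⟩
  · obtain ⟨e, he⟩ := exists_ne (0 : E)
    exact ⟨e, he, hι.elim⟩
  · obtain ⟨e, -, he⟩ := Module.Dual.exists_forall_mem_ne_zero_of_forall_exists ⊤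
      (fun l => (L l).toLinearMap) fun l => (hL l).imp fun v hv => ⟨trivial, hv⟩
    exact ⟨e, fun h0 => he l (by simp [h0]), he⟩

lemma exists_chart_slope_pos [FiniteDimensional ℝ E] (hn : Module.finrank ℝ E = n + 1) {f : E → ℝ}
    {x : E} (hslope : fderiv ℝ f x ≠ 0) : ∃ Φ : ((Fin n → ℝ) × ℝ) ≃L[ℝ] E,
      0 < fderiv ℝ (f ∘ Φ) (Φ.symm x) (0, 1) := by
  obtain ⟨v, hv⟩ : ∃ v, 0 < fderiv ℝ f x v := by
    obtain ⟨v, hv⟩ := DFunLike.ne_iff.1 hslope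
    rcases hv.lt_or_gt with hneg | hpos
    · exact ⟨-v, by simpa using hneg⟩
    · exact ⟨v, hpos⟩
  obtain ⟨Φ, rfl⟩ := exists_continuousLinearEquiv_prod_real_apply_eq hn (e := v)
    fun h0 => by simp [h0] at hv
  refine ⟨Φ, ?_⟩
  rwa [Φ.comp_right_fderiv, Φ.apply_symm_apply]

end LinearCharts

section RegularLevelSets

variable {Y : Type*} [NormedAddCommGroup Y] [NormedSpace ℝ Y]

lemma exists_mem_nhds_measure_zeros_prod_eq_zero [CompleteSpace Y] [MeasurableSpace Y]
    [OpensMeasurableSpace Y] {ν : Measure Y} {f : Y × ℝ → ℝ} {a : Y × ℝ}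
    (hf : ContDiffAt ℝ 1 f a) (hfa : f a = 0) (hslope : fderiv ℝ f a (0, 1) ≠ 0) :
    ∃ V ∈ 𝓝 a, (ν.prod volume) {x ∈ V | f x = 0} = 0 := by
  obtain ⟨τ, -, -, hsign⟩ := exists_sign_eq_sign_mul_sign_sub hf hfa hslope
  have hcont : ∀ᶠ x in 𝓝 a, ContinuousAt f x :=
    (hf.eventually (by simp)).mono fun x hx => hx.continuousAt
  obtain ⟨V, hV, hVo, haV⟩ := eventually_nhds_iff.1 (hsign.and hcont)
  refine ⟨V, hVo.mem_nhds haV, ?_⟩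
  have hmeas : MeasurableSet {x ∈ V | f x = 0} := by
    have hdiff : {x ∈ V | f x = 0} = V \ (V ∩ f ⁻¹' {0}ᶜ) := by
      ext x
      simp
    rw [hdiff]
    exact hVo.measurableSet.diff (ContinuousOn.isOpen_inter_preimage
      (fun x hx => (hV x hx).2.continuousWithinAt) hVo isOpen_compl_singleton).measurableSet
  refine (Measure.measure_prod_null hmeas).2 (Eventually.of_forall fun y => ?_)
  refine Set.Subsingleton.measure_zero (Set.subsingleton_of_subset_singleton (a := τ y) ?_) _
  rintro t ⟨ht, hft⟩
  have hs := (hV _ ht).1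
  rw [hft, sign_zero, eq_comm, mul_eq_zero, sign_eq_zero_iff, sign_eq_zero_iff] at hs
  exact sub_eq_zero.1 (hs.resolve_left hslope)

lemma exists_regionBetween_subset_slab [CompleteSpace Y] {f : Y × ℝ → ℝ} {a : Y × ℝ}
    (hf : ContDiffAt ℝ 1 f a) (hfa : f a = 0) (hslope : 0 < fderiv ℝ f a (0, 1))
    {W : Set (Y × ℝ)} (hW : W ∈ 𝓝 a) :
    ∃ τ : Y → ℝ, ∃ B ∈ 𝓝 a.1, IsOpen B ∧ ContinuousOn τ B ∧ ∃ r > 0, ∀ᶠ s in 𝓝[>] (0 : ℝ),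
      regionBetween τ (fun y => τ y + r * s) B ⊆ {x ∈ W | 0 < f x ∧ f x ≤ s} := by
  obtain ⟨τ, hτ, hτa, hsign⟩ := exists_sign_eq_sign_mul_sign_sub hf hfa hslope.ne'
  rw [sign_pos hslope] at hsign
  obtain ⟨M, T, hT, hM⟩ := hf.exists_lipschitzOnWith
  have hshift : Tendsto (fun q : Y × ℝ => (q.1, τ q.1 + q.2)) (𝓝 (a.1, 0)) (𝓝 a) := by
    have hτ1 : ContinuousAt (fun q : Y × ℝ => τ q.1) (a.1, 0) :=
      ContinuousAt.comp (f := Prod.fst) hτ.continuousAt continuousAt_fst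
    simpa [ContinuousAt, hτa] using continuousAt_fst.prodMk (hτ1.add continuousAt_snd)
  have hgood := hshift.eventually (hsign.and (inter_mem hW hT : ∀ᶠ x in 𝓝 a, x ∈ W ∩ T))
  rw [nhds_prod_eq, eventually_prod_iff] at hgood
  obtain ⟨A, hA, R, hR, hAR⟩ := hgood
  have hτcont : ∀ᶠ y in 𝓝 a.1, ContinuousAt τ y :=
    (hτ.eventually (by simp)).mono fun y hy => hy.continuousAt
  obtain ⟨B, hB, hBo, haB⟩ := eventually_nhds_iff.1 (hA.and hτcont)
  obtain ⟨δ, hδ, hRδ⟩ := Metric.eventually_nhds_iff.1 hR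
  have hM1 : (0 : ℝ) < M + 1 := by positivity
  refine ⟨τ, B, hBo.mem_nhds haB, hBo, fun y hy => (hB y hy).2.continuousWithinAt,
    ((M : ℝ) + 1)⁻¹, inv_pos.2 hM1, ?_⟩
  filter_upwards [Ioo_mem_nhdsGT (mul_pos hM1 hδ)] with s hs
  rintro ⟨y, t⟩ ⟨hy, hyt, hty⟩
  have hts : (M + 1) * (t - τ y) < s := by
    rw [← sub_lt_iff_lt_add', inv_mul_eq_div, lt_div_iff₀ hM1] at hty
    linarith
  have htδ : t - τ y < δ := lt_of_mul_lt_mul_left (hts.trans hs.2) hM1.le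
  have ht := hAR (hB y hy).1 (hRδ (y := t - τ y) (by
    rwa [Real.dist_0_eq_abs, abs_of_pos (sub_pos.2 hyt)]))
  have ht0 := hAR (hB y hy).1 (hRδ (y := 0) (by simpa using hδ))
  simp only [add_sub_cancel, add_zero, sub_self, sign_zero, mul_zero, one_mul] at ht ht0
  have hlip := hM.dist_le_mul _ ht.2.2 _ ht0.2.2
  rw [sign_eq_zero_iff.1 ht0.1, Real.dist_0_eq_abs, dist_prod_same_left, Real.dist_eq,
    abs_of_pos (sub_pos.2 hyt)] at hlip
  refine ⟨ht.2.1, ?_, by nlinarith [le_abs_self (f (y, t))]⟩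
  rw [← sign_eq_one_iff, ht.1, sign_pos (sub_pos.2 hyt)]

lemma exists_mul_le_measure_slab_prod [CompleteSpace Y] [MeasurableSpace Y]
    [OpensMeasurableSpace Y] {ν : Measure Y} [SFinite ν] [ν.IsOpenPosMeasure] {f : Y × ℝ → ℝ}
    {a : Y × ℝ} (hf : ContDiffAt ℝ 1 f a) (hfa : f a = 0) (hslope : 0 < fderiv ℝ f a (0, 1))
    {W : Set (Y × ℝ)} (hW : W ∈ 𝓝 a) :
    ∃ κ : ENNReal, κ ≠ 0 ∧ ∀ᶠ s in 𝓝[>] (0 : ℝ),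
      κ * ENNReal.ofReal s ≤ (ν.prod volume) {x ∈ W | 0 < f x ∧ f x ≤ s} := by
  obtain ⟨τ, B, hB, hBo, hτ, r, hr, hsub⟩ := exists_regionBetween_subset_slab hf hfa hslope hW
  refine ⟨ENNReal.ofReal r * ν B, mul_ne_zero (by simpa using hr)
    (Measure.measure_pos_of_mem_nhds ν hB).ne', ?_⟩
  filter_upwards [hsub] with s hs
  have hτmeas : AEMeasurable τ (ν.restrict B) := hτ.aemeasurable hBo.measurableSet
  calc ENNReal.ofReal r * ν B * ENNReal.ofReal s = ∫⁻ _ in B, ENNReal.ofReal (r * s) ∂ν := by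
        rw [setLIntegral_const, ENNReal.ofReal_mul hr.le]
        ring
    _ = (ν.prod volume) (regionBetween τ (fun y => τ y + r * s) B) := by
        rw [volume_regionBetween_eq_lintegral hτmeas (hτmeas.add_const _) hBo.measurableSet]
        simp
    _ ≤ _ := measure_mono hs

end RegularLevelSets

section FiniteDimensional

variable {P E ι : Type*} [NormedAddCommGroup P] [NormedSpace ℝ P] [NormedAddCommGroup E]
  [NormedSpace ℝ E] [FiniteDimensional ℝ E] [MeasurableSpace E] [BorelSpace E] {μ : Measure E}
  [μ.IsAddHaarMeasure] {n : ℕ}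

theorem weaklyDifferentiableAt_constraintSet [FiniteDimensional ℝ P] [Finite ι]
    (hn : Module.finrank ℝ E = n + 1) {f : ι → P × E → ℝ} {O : Set E} (hO : IsOpen O)
    (hf : ∀ l, ContDiffOn ℝ 1 (f l) (univ ×ˢ O)) {ψ : P}
    (htrans : ∀ l, ∀ x ∈ O, f l (ψ, x) = 0 → ∃ v, fderiv ℝ (f l) (ψ, x) (0, v) ≠ 0)
    (hnull : ∀ l m, l ≠ m → μH[(n : ℝ)] {x ∈ O | f l (ψ, x) = 0 ∧ f m (ψ, x) = 0} = 0) :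
    WeaklyDifferentiableAt μ (constraintSet O f) O ψ := by
  have : Nontrivial E := Module.nontrivial_of_finrank_eq_succ hn
  have : ProperSpace E := FiniteDimensional.proper ℝ E
  refine .of_locally fun x hx => ?_
  obtain ⟨e, he, hslope⟩ := exists_ne_zero_forall_apply_ne_zero
    (L := fun l : {l // f l (ψ, x) = 0} => fderiv ℝ (f l) (ψ, x) ∘L .inr ℝ P E)
    fun l => htrans l x hx l.2
  obtain ⟨Φ, rfl⟩ := exists_continuousLinearEquiv_prod_real_apply_eq hn he
  obtain ⟨c, -, hμ⟩ := exists_eq_smul_map_volume_prod μ Φ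
  obtain ⟨z, rfl⟩ := Φ.surjective x
  let Ψ : (P × (Fin n → ℝ) × ℝ) ≃L[ℝ] P × E := (ContinuousLinearEquiv.refl ℝ P).prodCongr Φ
  have hzeros : ∀ᵐ y : Fin n → ℝ, ∀ t, (y, t) ∈ Φ ⁻¹' O →
      {l | (f l ∘ Ψ) (ψ, y, t) = 0}.Subsingleton := by
    have hae := ae_all_iff.2 fun q : {q : ι × ι // q.1 ≠ q.2} =>
      ae_forall_notMem_of_hausdorffMeasure_eq_zero Φ (hnull _ _ q.2)
    filter_upwards [hae] with y hy t ht l hl m hm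
    by_contra hlm
    exact hy ⟨(l, m), hlm⟩ t ⟨ht, hl, hm⟩
  obtain ⟨V, hV, hVd⟩ := exists_weaklyDifferentiableAt_constraintSet_prod (ψ := ψ)
    (hO.preimage Φ.continuous)
    (fun l => (hf l).comp Ψ.contDiff.contDiffOn fun q hq => ⟨mem_univ _, hq.2⟩) hx
    (fun l hl => by rw [Ψ.comp_right_fderiv]; exact hslope ⟨l, hl⟩) hzeros
  refine ⟨Φ '' V, Φ.toHomeomorph.isOpenMap.image_mem_nhds hV, ?_⟩
  rw [hμ]
  refine WeaklyDifferentiableAt.smul_map Φ.toHomeomorph c ?_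
  rwa [Φ.coe_toHomeomorph, preimage_image_eq _ Φ.injective]

theorem measure_zeros_eq_zero (hn : Module.finrank ℝ E = n + 1) {f : E → ℝ} {Z : Set E}
    (hf : ∀ x ∈ Z, ContDiffAt ℝ 1 f x) (hzero : ∀ x ∈ Z, f x = 0)
    (hslope : ∀ x ∈ Z, fderiv ℝ f x ≠ 0) : μ Z = 0 := by
  refine measure_null_of_locally_null _ fun x hx => ?_
  obtain ⟨Φ, hΦ⟩ := exists_chart_slope_pos hn (hslope x hx)
  obtain ⟨c, -, hμ⟩ := exists_eq_smul_map_volume_prod μ Φ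
  have hemb : MeasurableEmbedding Φ := Φ.toHomeomorph.measurableEmbedding
  have hx' : Φ (Φ.symm x) = x := Φ.apply_symm_apply x
  obtain ⟨V, hV, hVnull⟩ := exists_mem_nhds_measure_zeros_prod_eq_zero (f := f ∘ Φ)
    (a := Φ.symm x) (ν := volume)
    (ContDiffAt.comp _ (by rw [hx']; exact hf x hx) Φ.contDiff.contDiffAt)
    (by simp [hzero x hx]) hΦ.ne'
  refine ⟨Z ∩ Φ.symm ⁻¹' V, inter_mem_nhdsWithin _
    (Φ.symm.continuous.continuousAt.preimage_mem_nhds hV), ?_⟩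
  rw [hμ, Measure.smul_apply, hemb.map_apply, measure_mono_null _ hVnull, smul_zero]
  rintro z ⟨hzZ, hzV⟩
  exact ⟨by simpa using hzV, hzero _ hzZ⟩

theorem exists_mul_le_measure_slab (hn : Module.finrank ℝ E = n + 1) {f : E → ℝ} {x : E}
    (hf : ContDiffAt ℝ 1 f x) (hfx : f x = 0) (hslope : fderiv ℝ f x ≠ 0) {W : Set E}
    (hW : W ∈ 𝓝 x) : ∃ κ : ENNReal, κ ≠ 0 ∧ ∀ᶠ s in 𝓝[>] (0 : ℝ),
      κ * ENNReal.ofReal s ≤ μ {y ∈ W | 0 < f y ∧ f y ≤ s} := by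
  obtain ⟨Φ, hΦ⟩ := exists_chart_slope_pos hn hslope
  obtain ⟨c, hc, hμ⟩ := exists_eq_smul_map_volume_prod μ Φ
  have hemb : MeasurableEmbedding Φ := Φ.toHomeomorph.measurableEmbedding
  have hx : Φ (Φ.symm x) = x := Φ.apply_symm_apply x
  obtain ⟨κ, hκ, hslab⟩ := exists_mul_le_measure_slab_prod (f := f ∘ Φ) (a := Φ.symm x)
    (ν := volume) (ContDiffAt.comp _ (by rwa [hx]) Φ.contDiff.contDiffAt) (by simp [hfx]) hΦ
    (Φ.continuous.continuousAt.preimage_mem_nhds (by rwa [hx]))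
  refine ⟨c * κ, mul_ne_zero (by simpa using hc) hκ, ?_⟩
  filter_upwards [hslab] with s hs
  rw [hμ, Measure.smul_apply, hemb.map_apply, mul_assoc]
  exact mul_le_mul_right hs _

end FiniteDimensional

section NullSetRemoval

variable {E : Type*} [NormedAddCommGroup E] [NormedSpace ℝ E] [FiniteDimensional ℝ E]
  [MeasurableSpace E] [BorelSpace E] {n : ℕ} {Z : Set E}

lemma dense_setOf_line_disjoint (hn : Module.finrank ℝ E = n + 1) (hZ : μH[(n : ℝ)] Z = 0) {e : E}
    (he : e ≠ 0) : Dense {x | ∀ t : ℝ, x + t • e ∉ Z} := by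
  obtain ⟨Φ, rfl⟩ := exists_continuousLinearEquiv_prod_real_apply_eq hn he
  have hdense := (Measure.dense_of_ae
    (ae_forall_notMem_of_hausdorffMeasure_eq_zero Φ hZ)).preimage
      (isOpenMap_fst.comp Φ.symm.toHomeomorph.isOpenMap)
  refine hdense.mono fun x hx t => ?_
  have hline : x + t • Φ (0, 1) = Φ ((Φ.symm x).1, (Φ.symm x).2 + t) := by
    rw [← map_smul, ← Φ.symm.injective.eq_iff, map_add, Φ.symm_apply_apply, Φ.symm_apply_apply]
    ext <;> simp
  rw [hline]
  exact hx _

lemma isPreconnected_diff_of_convex (hn : Module.finrank ℝ E = n + 1) (hZ : μH[(n : ℝ)] Z = 0)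
    {C : Set E} (hC : Convex ℝ C) (hCo : IsOpen C) : IsPreconnected (C \ Z) := by
  rintro A B hA hB hcover ⟨a, ⟨haC, haZ⟩, haA⟩ ⟨b, ⟨hbC, hbZ⟩, hbB⟩
  rcases eq_or_ne a b with rfl | hab
  · exact ⟨a, ⟨haC, haZ⟩, haA, hbB⟩
  have hopen : IsOpen ((C ∩ A) ∩ (fun x => x + (b - a)) ⁻¹' (C ∩ B)) :=
    (hCo.inter hA).inter ((hCo.inter hB).preimage (by fun_prop))
  obtain ⟨x, ⟨⟨hxC, hxA⟩, hyC, hyB⟩, hline⟩ :=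
    (dense_setOf_line_disjoint hn hZ (sub_ne_zero.2 hab.symm)).inter_open_nonempty _ hopen
      ⟨a, ⟨haC, haA⟩, by simpa using ⟨hbC, hbB⟩⟩
  have hsegment : segment ℝ x (x + (b - a)) ⊆ C \ Z := by
    refine fun z hz => ⟨hC.segment_subset hxC hyC hz, ?_⟩
    rw [segment_eq_image'] at hz
    obtain ⟨t, -, rfl⟩ := hz
    simpa using hline t
  obtain ⟨z, hz, hzAB⟩ := (convex_segment x (x + (b - a))).isPreconnected A B hA hB
    (hsegment.trans hcover) ⟨x, left_mem_segment ℝ _ _, hxA⟩ ⟨_, right_mem_segment ℝ _ _, hyB⟩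
  exact ⟨z, hsegment hz, hzAB⟩

theorem isPreconnected_diff_of_hausdorffMeasure_eq_zero (hn : Module.finrank ℝ E = n + 1)
    (hZ : μH[(n : ℝ)] Z = 0) {U : Set E} (hU : IsPreconnected U) (hUo : IsOpen U) :
    IsPreconnected (U \ Z) := by
  have : Nontrivial E := Module.nontrivial_of_finrank_eq_succ hn
  obtain ⟨e, he⟩ := exists_ne (0 : E)
  have hdense : Dense Zᶜ :=
    (dense_setOf_line_disjoint hn hZ he).mono fun x hx => by simpa using hx 0
  intro A B hA hB hcover ⟨a, haU, haA⟩ ⟨b, hbU, hbB⟩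
  have hclosure : U ⊆ closure (U \ Z ∩ A) ∪ closure (U \ Z ∩ B) := by
    rw [← closure_union, ← inter_union_distrib_left, inter_eq_left.2 hcover]
    exact hdense.open_subset_closure_inter hUo
  obtain ⟨x, hxU, hxA, hxB⟩ := isPreconnected_closed_iff.1 hU _ _ isClosed_closure isClosed_closure
    hclosure ⟨a, haU.1, subset_closure ⟨haU, haA⟩⟩ ⟨b, hbU.1, subset_closure ⟨hbU, hbB⟩⟩
  obtain ⟨r, hr, hball⟩ := Metric.isOpen_iff.1 hUo x hxU
  have hmeets {D : Set E} (hxD : x ∈ closure (U \ Z ∩ D)) : (Metric.ball x r \ Z ∩ D).Nonempty := by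
    obtain ⟨z, hz, hzU, hzD⟩ := mem_closure_iff.1 hxD _ Metric.isOpen_ball (Metric.mem_ball_self hr)
    exact ⟨z, ⟨hz, hzU.2⟩, hzD⟩
  have hsub : Metric.ball x r \ Z ⊆ U \ Z := sdiff_subset_sdiff_left hball
  exact (isPreconnected_diff_of_convex hn hZ (convex_ball x r) Metric.isOpen_ball A B hA hB
    (hsub.trans hcover) (hmeets hxA) (hmeets hxB)).mono (inter_subset_inter_left _ hsub)

end NullSetRemoval

section Maximizers

variable {T ι : Type*} [Fintype ι] {g : ι → T → ℝ} {U : Set T}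

lemma exists_common_maximizers_of_isPreconnected [TopologicalSpace T] [DecidableEq ι]
    (hU : IsPreconnected U) (hg : ∀ k, ContinuousOn (g k) U) {S : Finset ι} {a b : T} (ha : a ∈ U)
    (hb : b ∈ U) (haS : ∃ j ∈ S, ∀ k, g k a ≤ g j a) (hbS : ∃ i ∈ Sᶜ, ∀ k, g k b ≤ g i b) :
    ∃ x ∈ U, ∃ j ∈ S, ∃ i ∈ Sᶜ, g j x = g i x ∧ ∀ k, g k x ≤ g i x := by
  obtain ⟨j₀, hj₀, hmaxa⟩ := haS
  obtain ⟨i₀, hi₀, hmaxb⟩ := hbS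
  have hS : S.Nonempty := ⟨j₀, hj₀⟩
  have hSc : Sᶜ.Nonempty := ⟨i₀, hi₀⟩
  obtain ⟨x, hx, heq⟩ := hU.intermediate_value₂ ha hb
    (ContinuousOn.finset_sup'_apply hSc fun k _ => hg k)
    (ContinuousOn.finset_sup'_apply hS fun k _ => hg k)
    (Finset.sup'_le _ _ fun k _ => (hmaxa k).trans (Finset.le_sup' (g · a) hj₀))
    (Finset.sup'_le _ _ fun k _ => (hmaxb k).trans (Finset.le_sup' (g · b) hi₀))
  obtain ⟨j, hj, hjx⟩ := Finset.exists_mem_eq_sup' hS (g · x)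
  obtain ⟨i, hi, hix⟩ := Finset.exists_mem_eq_sup' hSc (g · x)
  refine ⟨x, hx, j, hj, i, hi, by rw [← hix, ← hjx, heq], fun k => ?_⟩
  by_cases hk : k ∈ S
  · rw [← hix, heq]
    exact Finset.le_sup' (g · x) hk
  · rw [← hix]
    exact Finset.le_sup' (g · x) (Finset.mem_compl.2 hk)

theorem exists_pure_tie [NormedAddCommGroup T] [NormedSpace ℝ T] [FiniteDimensional ℝ T]
    [MeasurableSpace T] [BorelSpace T] [DecidableEq ι] {n : ℕ} (hn : Module.finrank ℝ T = n + 1)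
    (hUo : IsOpen U) (hU : IsPreconnected U) (hg : ∀ k, ContinuousOn (g k) U)
    (hties : ∀ i j k, i ≠ j → i ≠ k → j ≠ k →
      μH[(n : ℝ)] {x ∈ U | g i x = g j x ∧ g i x = g k x} = 0)
    (hmax : ∀ i, ∃ x ∈ U, ∀ k, k ≠ i → g k x < g i x) {S : Finset ι} (hS : S.Nonempty)
    (hSc : Sᶜ.Nonempty) :
    ∃ x ∈ U, ∃ j ∈ S, ∃ i ∈ Sᶜ, g j x = g i x ∧ ∀ k, k ≠ i → k ≠ j → g k x < g i x := by
  let Z : Set T := {x ∈ U | ∃ i j k, i ≠ j ∧ i ≠ k ∧ j ≠ k ∧ g i x = g j x ∧ g i x = g k x ∧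
    ∀ l, g l x ≤ g i x}
  have hZ : μH[(n : ℝ)] Z = 0 := by
    have hunion := measure_iUnion_null_iff.2 fun q : {q : ι × ι × ι //
      q.1 ≠ q.2.1 ∧ q.1 ≠ q.2.2 ∧ q.2.1 ≠ q.2.2} => hties _ _ _ q.2.1 q.2.2.1 q.2.2.2
    refine measure_mono_null ?_ hunion
    rintro x ⟨hx, i, j, k, hij, hik, hjk, htij, htik, -⟩
    exact mem_iUnion.2 ⟨⟨(i, j, k), hij, hik, hjk⟩, hx, htij, htik⟩
  have hmaxZ (i : ι) : ∃ x ∈ U \ Z, ∀ k, g k x ≤ g i x := by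
    obtain ⟨x, hx, hlt⟩ := hmax i
    refine ⟨x, ⟨hx, ?_⟩, fun k => ?_⟩
    · rintro ⟨-, i', j', -, hij, -, -, htie, -, hle⟩
      have heq (l : ι) (hl : g i x ≤ g l x) : l = i := by_contra fun h => (hlt l h).not_ge hl
      exact hij ((heq i' (hle i)).trans (heq j' (htie ▸ hle i)).symm)
    · rcases eq_or_ne k i with rfl | hk
      exacts [le_rfl, (hlt k hk).le]
  obtain ⟨j₀, hj₀⟩ := hS
  obtain ⟨i₀, hi₀⟩ := hSc
  obtain ⟨a, ha, hja⟩ := hmaxZ j₀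
  obtain ⟨b, hb, hib⟩ := hmaxZ i₀
  obtain ⟨x, hx, j, hj, i, hi, htie, hle⟩ := exists_common_maximizers_of_isPreconnected
    (isPreconnected_diff_of_hausdorffMeasure_eq_zero hn hZ hU hUo)
    (fun k => (hg k).mono sdiff_subset) ha hb ⟨j₀, hj₀, hja⟩ ⟨i₀, hi₀, hib⟩
  refine ⟨x, hx.1, j, hj, i, hi, htie, fun k hki hkj => (hle k).lt_of_ne fun hk => hx.2 ?_⟩
  have hij : i ≠ j := fun h => Finset.mem_compl.1 hi (h ▸ hj)
  exact ⟨hx.1, i, j, k, hij, hki.symm, hkj.symm, htie.symm, hk.symm, hle⟩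

end Maximizers

section FirstOrderEstimates

variable {E : Type*} [NormedAddCommGroup E] [NormedSpace ℝ E]

lemma le_apply_of_eventually_add_mul_le {φ : E → ℝ} {φ' : E →L[ℝ] ℝ} {x v : E} {κ : ℝ}
    (hφ : HasFDerivAt φ φ' x) (hκ : ∀ᶠ s in 𝓝[>] (0 : ℝ), φ x + κ * s ≤ φ (x + s • v)) :
    κ ≤ φ' v := by
  refine ge_of_tendsto (hφ.hasLineDerivAt v).tendsto_slope_zero_right ?_
  filter_upwards [hκ, self_mem_nhdsWithin] with s hs hspos
  rw [smul_eq_mul, inv_mul_eq_div, le_div_iff₀ hspos]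
  linarith

lemma eventually_apply_add_le_sub_mul {F : E × ℝ → ℝ} {x : E} {v c : ℝ}
    (hF : ContDiffAt ℝ 1 F (x, v)) (hc : fderiv ℝ F (x, v) (0, 1) < -c) :
    ∀ᶠ q in 𝓝 (x, (0 : ℝ)), 0 ≤ q.2 → F (q.1, v + q.2) ≤ F (q.1, v) - c * q.2 := by
  set L := fderiv ℝ F (x, v)
  have hstrict : HasStrictFDerivAt F L (x, v) := hF.hasStrictFDerivAt one_ne_zero
  have hpair : Tendsto (fun q : E × ℝ => ((q.1, v + q.2), (q.1, v))) (𝓝 (x, 0))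
      (𝓝 ((x, v), (x, v))) := by
    have : Continuous fun q : E × ℝ => ((q.1, v + q.2), (q.1, v)) := by fun_prop
    simpa only [add_zero] using this.tendsto (x, 0)
  filter_upwards [hpair.eventually (hstrict.isLittleO.bound (sub_pos.2 hc))] with q hq hq0
  have hincr : ((q.1, v + q.2) : E × ℝ) - (q.1, v) = q.2 • (0, 1) := by simp
  have hnorm : ‖q.2 • ((0, 1) : E × ℝ)‖ = q.2 := by
    simp [abs_of_nonneg hq0, hq0]
  rw [hincr, hnorm, map_smul, smul_eq_mul, Real.norm_eq_abs] at hq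
  linarith [le_abs_self (F (q.1, v + q.2) - F (q.1, v) - q.2 * L (0, 1))]

variable [FiniteDimensional ℝ E] [MeasurableSpace E] [BorelSpace E] {μ : Measure E}
  [μ.IsAddHaarMeasure] {n : ℕ}

lemma exists_ofReal_mul_le_withDensity_slab (hn : Module.finrank ℝ E = n + 1) {f ρ : E → ℝ}
    {x : E} {W : Set E} (hf : ContDiffAt ℝ 1 f x) (hfx : f x = 0) (hslope : fderiv ℝ f x ≠ 0)
    (hρ : Continuous ρ) (hρx : 0 < ρ x) (hW : W ∈ 𝓝 x) :
    ∃ κ : ℝ, 0 < κ ∧ ∀ᶠ s in 𝓝[>] (0 : ℝ), ENNReal.ofReal (κ * s) ≤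
      (μ.withDensity fun y => ENNReal.ofReal (ρ y)) {y ∈ W | 0 < f y ∧ f y ≤ s} := by
  have hρW : W ∩ {y | ρ x / 2 < ρ y} ∈ 𝓝 x :=
    inter_mem hW (hρ.continuousAt.eventually_const_lt (half_lt_self hρx))
  obtain ⟨κ, hκ, hslab⟩ := exists_mul_le_measure_slab (μ := μ) hn hf hfx hslope hρW
  obtain ⟨r, hr, hrκ⟩ := ENNReal.lt_iff_exists_nnreal_btwn.1 (pos_iff_ne_zero.2 hκ)
  refine ⟨ρ x / 2 * r, mul_pos (half_pos hρx) (by exact_mod_cast hr), ?_⟩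
  filter_upwards [hslab] with s hs
  set A := {y ∈ W ∩ {y | ρ x / 2 < ρ y} | 0 < f y ∧ f y ≤ s}
  calc ENNReal.ofReal (ρ x / 2 * r * s)
      = ENNReal.ofReal (ρ x / 2) * (r * ENNReal.ofReal s) := by
        rw [mul_assoc, ENNReal.ofReal_mul (half_pos hρx).le, ENNReal.ofReal_mul r.coe_nonneg,
          ENNReal.ofReal_coe_nnreal]
    _ ≤ ENNReal.ofReal (ρ x / 2) * μ A := by gcongr; exact le_trans (by gcongr) hs
    _ = ∫⁻ _ in A, ENNReal.ofReal (ρ x / 2) ∂μ := (setLIntegral_const _ _).symm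
    _ ≤ ∫⁻ y in A, ENNReal.ofReal (ρ y) ∂μ :=
        setLIntegral_mono hρ.measurable.ennreal_ofReal
          fun y hy => ENNReal.ofReal_le_ofReal hy.1.2.le
    _ ≤ (μ.withDensity fun y => ENNReal.ofReal (ρ y)) A := withDensity_apply_le _ _
    _ ≤ _ := measure_mono (ofPred_subset_ofPred.2 fun y hy => ⟨hy.1.1, hy.2⟩)

end FirstOrderEstimates

section LaguerreCells

/-- `C¹` generating functions on `Ω` with finite target, i.e. the conditions (Mono) and (Twist)
with target points replaced by their indices. The gradient in `x` enters through the Fréchet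
derivative of the slice `G(·, yᵢ, v)`. -/
structure IsGeneratingFunction (Ω : Set (EuclideanSpace ℝ (Fin d)))
    (G : EuclideanSpace ℝ (Fin d) → Fin N → ℝ → ℝ) : Prop where
  contDiffOn (i : Fin N) :
    ContDiffOn ℝ 1 (fun q : EuclideanSpace ℝ (Fin d) × ℝ => G q.1 i q.2) (Ω ×ˢ univ)
  deriv_neg : ∀ x ∈ Ω, ∀ i v, deriv (G x i) v < 0
  injective_twist : ∀ x ∈ Ω, Function.Injective fun q : Fin N × ℝ =>
    (G x q.1 q.2, fderiv ℝ (fun x' => G x' q.1 q.2) x)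

/-- The function `(ψ, x) ↦ G(x, yᵢ, ψᵢ) - G(x, yⱼ, ψⱼ)`: the cell of `i` is cut out by its
nonnegativity for all `j ≠ i`, and the interface `Γᵢⱼ(ψ)` is its zero set. -/
def valueGap (G : EuclideanSpace ℝ (Fin d) → Fin N → ℝ → ℝ) (i j : Fin N)
    (q : (Fin N → ℝ) × EuclideanSpace ℝ (Fin d)) : ℝ :=
  G q.2 i (q.1 i) - G q.2 j (q.1 j)

variable {Ω : Set (EuclideanSpace ℝ (Fin d))} {G : EuclideanSpace ℝ (Fin d) → Fin N → ℝ → ℝ}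

lemma Lag_eq_constraintSet (ψ : Fin N → ℝ) (i : Fin N) :
    Lag Ω G ψ i = constraintSet Ω (fun j : {j // j ≠ i} => valueGap G i j) ψ := by
  ext x
  refine and_congr_right fun _ => ⟨fun hmax j => sub_nonneg.2 (hmax j), fun hgap j => ?_⟩
  obtain rfl | hji := eq_or_ne j i
  · exact le_rfl
  · exact sub_nonneg.1 (hgap ⟨j, hji⟩)

lemma iUnion_Lag [Nonempty (Fin N)] (ψ : Fin N → ℝ) : ⋃ i, Lag Ω G ψ i = Ω := by
  refine subset_antisymm (iUnion_subset fun i x hx => hx.1) fun x hx => mem_iUnion.2 ?_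
  obtain ⟨i, hi⟩ := Finite.exists_max fun i => G x i (ψ i)
  exact ⟨i, hx, hi⟩

namespace IsGeneratingFunction

lemma contDiffAt (hG : IsGeneratingFunction Ω G) (hΩ : IsOpen Ω) {x : EuclideanSpace ℝ (Fin d)}
    (hx : x ∈ Ω) (i : Fin N) (v : ℝ) :
    ContDiffAt ℝ 1 (fun q : EuclideanSpace ℝ (Fin d) × ℝ => G q.1 i q.2) (x, v) :=
  (hG.contDiffOn i).contDiffAt ((hΩ.prod isOpen_univ).mem_nhds ⟨hx, mem_univ v⟩)

lemma contDiffAt_slice (hG : IsGeneratingFunction Ω G) (hΩ : IsOpen Ω)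
    {x : EuclideanSpace ℝ (Fin d)} (hx : x ∈ Ω) (i : Fin N) (v : ℝ) :
    ContDiffAt ℝ 1 (fun x' => G x' i v) x :=
  (hG.contDiffAt hΩ hx i v).comp x (contDiffAt_id.prodMk contDiffAt_const)

lemma contDiffOn_valueGap (hG : IsGeneratingFunction Ω G) (i j : Fin N) :
    ContDiffOn ℝ 1 (valueGap G i j) (univ ×ˢ Ω) := by
  have hterm (k : Fin N) : ContDiffOn ℝ 1
      (fun q : (Fin N → ℝ) × EuclideanSpace ℝ (Fin d) => G q.2 k (q.1 k)) (univ ×ˢ Ω) := by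
    have hcoord : ContDiff ℝ 1
        fun q : (Fin N → ℝ) × EuclideanSpace ℝ (Fin d) => (q.2, q.1 k) := by fun_prop
    exact (hG.contDiffOn k).comp hcoord.contDiffOn fun q hq => ⟨hq.2, mem_univ _⟩
  exact (hterm i).sub (hterm j)

lemma contDiffAt_valueGap_slice (hG : IsGeneratingFunction Ω G) (hΩ : IsOpen Ω)
    {x : EuclideanSpace ℝ (Fin d)} (hx : x ∈ Ω) (i j : Fin N) (ψ : Fin N → ℝ) :
    ContDiffAt ℝ 1 (fun x' => valueGap G i j (ψ, x')) x :=
  (hG.contDiffAt_slice hΩ hx i (ψ i)).sub (hG.contDiffAt_slice hΩ hx j (ψ j))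

lemma fderiv_valueGap_slice_ne_zero (hG : IsGeneratingFunction Ω G) (hΩ : IsOpen Ω)
    {x : EuclideanSpace ℝ (Fin d)} (hx : x ∈ Ω) {i j : Fin N} (hij : i ≠ j) {ψ : Fin N → ℝ}
    (htie : valueGap G i j (ψ, x) = 0) : fderiv ℝ (fun x' => valueGap G i j (ψ, x')) x ≠ 0 := by
  have hdiff (k : Fin N) : DifferentiableAt ℝ (fun x' => G x' k (ψ k)) x :=
    (hG.contDiffAt_slice hΩ hx k (ψ k)).differentiableAt one_ne_zero
  intro hzero
  have hgrad : fderiv ℝ (fun x' => G x' i (ψ i)) x = fderiv ℝ (fun x' => G x' j (ψ j)) x :=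
    sub_eq_zero.1 ((fderiv_fun_sub (hdiff i) (hdiff j)).symm.trans hzero)
  have hpair : (i, ψ i) = (j, ψ j) :=
    hG.injective_twist x hx (Prod.ext (sub_eq_zero.1 htie) hgrad)
  exact hij (congrArg Prod.fst hpair)

lemma exists_fderiv_valueGap_ne_zero (hG : IsGeneratingFunction Ω G) (hΩ : IsOpen Ω)
    {x : EuclideanSpace ℝ (Fin d)} (hx : x ∈ Ω) {i j : Fin N} (hij : i ≠ j) {ψ : Fin N → ℝ}
    (htie : valueGap G i j (ψ, x) = 0) : ∃ v, fderiv ℝ (valueGap G i j) (ψ, x) (0, v) ≠ 0 := by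
  have hdiff : DifferentiableAt ℝ (valueGap G i j) (ψ, x) :=
    ((hG.contDiffOn_valueGap i j).contDiffAt ((isOpen_univ.prod hΩ).mem_nhds
      ⟨mem_univ ψ, hx⟩)).differentiableAt one_ne_zero
  have hslice := hdiff.hasFDerivAt.comp x (hasFDerivAt_prodMk_right ψ x)
  obtain ⟨v, hv⟩ :=
    DFunLike.ne_iff.1 (hG.fderiv_valueGap_slice_ne_zero hΩ hx hij htie)
  exact ⟨v, fun hzero => hv ((DFunLike.congr_fun hslice.fderiv v).trans hzero)⟩

lemma measurableSet_Lag (hG : IsGeneratingFunction Ω G) (hΩ : IsOpen Ω) (ψ : Fin N → ℝ)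
    (i : Fin N) : MeasurableSet (Lag Ω G ψ i) := by
  rw [Lag_eq_constraintSet]
  exact measurableSet_constraintSet hΩ
    (fun j : {j // j ≠ i} => (hG.contDiffOn_valueGap i j).continuousOn) ψ

lemma volume_Gam (hG : IsGeneratingFunction Ω G) (hd : 1 ≤ d) (hΩ : IsOpen Ω)
    (ψ : Fin N → ℝ) {i j : Fin N} (hij : i ≠ j) : volume (Gam Ω G ψ i j) = 0 := by
  have htie {x} (hx : x ∈ Gam Ω G ψ i j) : valueGap G i j (ψ, x) = 0 := sub_eq_zero.2 hx.2
  exact measure_zeros_eq_zero (n := d - 1) (by rw [finrank_euclideanSpace_fin]; omega)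
    (fun x hx => hG.contDiffAt_valueGap_slice hΩ hx.1 i j ψ) (fun x => htie)
    fun x hx => hG.fderiv_valueGap_slice_ne_zero hΩ hx.1 hij (htie hx)

lemma antitone (hG : IsGeneratingFunction Ω G) {x : EuclideanSpace ℝ (Fin d)} (hx : x ∈ Ω)
    (i : Fin N) : Antitone (G x i) :=
  (strictAnti_of_deriv_neg (hG.deriv_neg x hx i)).antitone

lemma Lag_subset_Lag_add_single (hG : IsGeneratingFunction Ω G) (ψ : Fin N → ℝ) {i j : Fin N}
    (hij : i ≠ j) {s : ℝ} (hs : 0 ≤ s) :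
    Lag Ω G ψ i ⊆ Lag Ω G (ψ + s • Pi.single j 1) i := by
  rintro x ⟨hx, hmax⟩
  refine ⟨hx, fun k => (hG.antitone hx k ?_).trans ((hmax k).trans_eq (by simp [hij]))⟩
  obtain rfl | hkj := eq_or_ne k j
  · simpa using hs
  · simp [hkj]

lemma fderiv_zero_one_neg (hG : IsGeneratingFunction Ω G) (hΩ : IsOpen Ω)
    {x : EuclideanSpace ℝ (Fin d)} (hx : x ∈ Ω) (i : Fin N) (v : ℝ) :
    fderiv ℝ (fun q : EuclideanSpace ℝ (Fin d) × ℝ => G q.1 i q.2) (x, v) (0, 1) < 0 := by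
  have hdiff := (hG.contDiffAt hΩ hx i v).differentiableAt one_ne_zero
  have hslice : HasDerivAt (G x i)
      (fderiv ℝ (fun q : EuclideanSpace ℝ (Fin d) × ℝ => G q.1 i q.2) (x, v) (0, 1)) v :=
    hdiff.hasFDerivAt.comp_hasDerivAt v ((hasDerivAt_const v x).prodMk (hasDerivAt_id v))
  exact hslice.deriv ▸ hG.deriv_neg x hx i v

lemma exists_slab_subset_Lag_sdiff (hG : IsGeneratingFunction Ω G) (hΩ : IsOpen Ω)
    {x : EuclideanSpace ℝ (Fin d)} (hx : x ∈ Ω) {i j : Fin N} (hij : i ≠ j) {ψ : Fin N → ℝ}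
    (hmax : ∀ k, k ≠ i → k ≠ j → G x k (ψ k) < G x i (ψ i)) :
    ∃ c > 0, ∃ W ∈ 𝓝 x, ∀ᶠ s in 𝓝[>] (0 : ℝ),
      {z ∈ W | 0 < valueGap G j i (ψ, z) ∧ valueGap G j i (ψ, z) ≤ c * s} ⊆
        Lag Ω G (ψ + s • Pi.single j 1) i \ Lag Ω G ψ i := by
  obtain ⟨c, hc, hslope⟩ := exists_between (neg_pos.2 (hG.fderiv_zero_one_neg hΩ hx j (ψ j)))
  have hdrop := eventually_apply_add_le_sub_mul (hG.contDiffAt hΩ hx j (ψ j)) (c := c)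
    (by linarith)
  rw [nhds_prod_eq, eventually_prod_iff] at hdrop
  obtain ⟨near, hnear, small, hsmall, hdrop⟩ := hdrop
  have hcont (k : Fin N) : ContinuousAt (fun z => G z k (ψ k)) x :=
    (hG.contDiffAt_slice hΩ hx k (ψ k)).continuousAt
  have hothers : ∀ᶠ z in 𝓝 x, ∀ k, k ≠ i → k ≠ j → G z k (ψ k) < G z i (ψ i) := by
    simp only [eventually_all]
    exact fun k hki hkj => (hcont k).eventually_lt (hcont i) (hmax k hki hkj)
  refine ⟨c, hc, _, (hΩ.eventually_mem hx).and (hnear.and hothers), ?_⟩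
  filter_upwards [hsmall.filter_mono nhdsWithin_le_nhds, self_mem_nhdsWithin] with s hs hspos
  rintro z ⟨⟨hzΩ, hznear, hzothers⟩, hzpos, hzle⟩
  refine ⟨⟨hzΩ, fun k => ?_⟩, fun hz => hzpos.not_ge (sub_nonpos.2 (hz.2 j))⟩
  rw [show (ψ + s • Pi.single j 1 : Fin N → ℝ) i = ψ i by simp [hij]]
  obtain rfl | hkj := eq_or_ne k j
  · have hdrop_z := hdrop hznear hs (le_of_lt hspos)
    simp only [Pi.add_apply, Pi.smul_apply, Pi.single_eq_same, smul_eq_mul, mul_one]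
    simp only [valueGap] at hzle
    linarith
  · rw [show (ψ + s • Pi.single j 1 : Fin N → ℝ) k = ψ k by simp [hkj]]
    obtain rfl | hki := eq_or_ne k i
    · exact le_rfl
    · exact (hzothers k hki hkj).le

end IsGeneratingFunction

end LaguerreCells

section CellMasses

variable {Ω : Set (EuclideanSpace ℝ (Fin d))} {G : EuclideanSpace ℝ (Fin d) → Fin N → ℝ → ℝ}
  {ρ : EuclideanSpace ℝ (Fin d) → ℝ}

namespace IsGeneratingFunction

lemma Hfun_eq_setIntegral (hG : IsGeneratingFunction Ω G) (hΩ : IsOpen Ω) (hρ : Continuous ρ)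
    (hρ0 : ∀ x, 0 ≤ ρ x) (ψ : Fin N → ℝ) (i : Fin N) :
    Hfun Ω G ρ ψ i = ∫ x in Lag Ω G ψ i, ρ x := by
  rw [integral_eq_lintegral_of_nonneg_ae (Eventually.of_forall hρ0) hρ.aestronglyMeasurable,
    ← withDensity_apply _ (hG.measurableSet_Lag hΩ ψ i), Hfun]

lemma differentiableAt_Hfun (hG : IsGeneratingFunction Ω G) (hd : 1 ≤ d) (hΩ : IsOpen Ω)
    (hρ : Continuous ρ) (hρ0 : ∀ x, 0 ≤ ρ x) (hρcs : HasCompactSupport ρ)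
    (hρΩ : tsupport ρ ⊆ Ω) {ψ : Fin N → ℝ}
    (hgen : ∀ i j k : Fin N, i ≠ j → i ≠ k → j ≠ k →
      μH[(d : ℝ) - 1] (Gam Ω G ψ i j ∩ Gam Ω G ψ i k) = 0) :
    DifferentiableAt ℝ (Hfun Ω G ρ) ψ := by
  refine differentiableAt_pi.2 fun i => ?_
  simp_rw [hG.Hfun_eq_setIntegral hΩ hρ hρ0, Lag_eq_constraintSet]
  refine weaklyDifferentiableAt_constraintSet (n := d - 1)
    (by rw [finrank_euclideanSpace_fin]; omega) hΩ
    (fun j : {j // j ≠ i} => hG.contDiffOn_valueGap i j)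
    (fun j x hx htie => hG.exists_fderiv_valueGap_ne_zero hΩ hx j.2.symm htie)
    (fun j k hjk => ?_) ρ hρ hρcs hρΩ
  rw [Nat.cast_pred hd]
  refine measure_mono_null ?_ (hgen i j k j.2.symm k.2.symm (Subtype.coe_ne_coe.2 hjk))
  rintro x ⟨hx, hj, hk⟩
  exact ⟨⟨hx, sub_eq_zero.1 hj⟩, hx, sub_eq_zero.1 hk⟩

lemma sum_Hfun (hG : IsGeneratingFunction Ω G) (hd : 1 ≤ d) (hΩ : IsOpen Ω) [Nonempty (Fin N)]
    (hρ : Integrable ρ) (ψ : Fin N → ℝ) :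
    ∑ i, Hfun Ω G ρ ψ i =
      (volume.withDensity fun x => ENNReal.ofReal (ρ x)).real Ω := by
  set μ := volume.withDensity fun x => ENNReal.ofReal (ρ x)
  have : IsFiniteMeasure μ := isFiniteMeasure_withDensity_ofReal hρ.2
  have hdisj : Pairwise (Function.onFun (AEDisjoint μ) (Lag Ω G ψ)) := by
    refine fun i j hij => measure_mono_null ?_
      (withDensity_absolutelyContinuous _ _ (hG.volume_Gam hd hΩ ψ hij))
    exact fun x hx => ⟨hx.1.1, le_antisymm (hx.2.2 i) (hx.1.2 j)⟩
  calc ∑ i, Hfun Ω G ρ ψ i = (∑ i, μ (Lag Ω G ψ i)).toReal :=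
        (ENNReal.toReal_sum fun i _ => measure_ne_top μ _).symm
    _ = μ.real (⋃ i, Lag Ω G ψ i) := by
        rw [measureReal_def, measure_iUnion₀ hdisj
          fun i => (hG.measurableSet_Lag hΩ ψ i).nullMeasurableSet, tsum_fintype]
    _ = μ.real Ω := by rw [iUnion_Lag]

lemma sum_fderiv_Hfun (hG : IsGeneratingFunction Ω G) (hd : 1 ≤ d) (hΩ : IsOpen Ω)
    [Nonempty (Fin N)] (hρ : Integrable ρ) {ψ : Fin N → ℝ}
    (hdiff : DifferentiableAt ℝ (Hfun Ω G ρ) ψ) (w : Fin N → ℝ) :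
    ∑ i, fderiv ℝ (Hfun Ω G ρ) ψ w i = 0 := by
  have hsum : HasFDerivAt (fun p => ∑ i, Hfun Ω G ρ p i)
      (∑ i, (ContinuousLinearMap.proj i).comp (fderiv ℝ (Hfun Ω G ρ) ψ)) ψ :=
    HasFDerivAt.fun_sum fun i _ => hasFDerivAt_pi'.1 hdiff.hasFDerivAt i
  simp only [hG.sum_Hfun hd hΩ hρ] at hsum
  simpa using DFunLike.congr_fun (hsum.unique (hasFDerivAt_const _ ψ)) w

lemma fderiv_Hfun_nonneg (hG : IsGeneratingFunction Ω G) (hρ : Integrable ρ) {ψ : Fin N → ℝ}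
    (hdiff : DifferentiableAt ℝ (Hfun Ω G ρ) ψ) {i j : Fin N} (hij : i ≠ j) :
    0 ≤ fderiv ℝ (Hfun Ω G ρ) ψ (Pi.single j 1) i := by
  have := isFiniteMeasure_withDensity_ofReal hρ.2
  refine le_apply_of_eventually_add_mul_le (hasFDerivAt_pi'.1 hdiff.hasFDerivAt i) ?_
  filter_upwards [self_mem_nhdsWithin] with s hs
  rw [zero_mul, add_zero]
  exact measureReal_mono (hG.Lag_subset_Lag_add_single ψ hij (le_of_lt hs))

lemma fderiv_Hfun_pos (hG : IsGeneratingFunction Ω G) (hd : 1 ≤ d) (hΩ : IsOpen Ω)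
    (hρ : Continuous ρ) (hint : Integrable ρ) {ψ : Fin N → ℝ}
    (hdiff : DifferentiableAt ℝ (Hfun Ω G ρ) ψ)
    {x : EuclideanSpace ℝ (Fin d)} (hx : x ∈ Ω) (hρx : 0 < ρ x) {i j : Fin N} (hij : i ≠ j)
    (htie : G x j (ψ j) = G x i (ψ i))
    (hmax : ∀ k, k ≠ i → k ≠ j → G x k (ψ k) < G x i (ψ i)) :
    0 < fderiv ℝ (Hfun Ω G ρ) ψ (Pi.single j 1) i := by
  set μ := volume.withDensity fun x => ENNReal.ofReal (ρ x)
  have : IsFiniteMeasure μ := isFiniteMeasure_withDensity_ofReal hint.2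
  obtain ⟨c, hc, W, hW, hsub⟩ := hG.exists_slab_subset_Lag_sdiff hΩ hx hij hmax
  obtain ⟨κ, hκ, hslab⟩ := exists_ofReal_mul_le_withDensity_slab (n := d - 1) (μ := volume)
    (by rw [finrank_euclideanSpace_fin]; omega) (hG.contDiffAt_valueGap_slice hΩ hx j i ψ)
    (sub_eq_zero.2 htie)
    (hG.fderiv_valueGap_slice_ne_zero hΩ hx hij.symm (sub_eq_zero.2 htie)) hρ hρx hW
  have hscale : Tendsto (fun s => c * s) (𝓝[>] 0) (𝓝[>] 0) :=
    tendsto_nhdsWithin_iff.2 ⟨tendsto_nhdsWithin_of_tendsto_nhds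
      (by simpa using (continuous_const_mul c).tendsto 0),
      eventually_mem_nhdsWithin.mono fun s hs => mul_pos hc hs⟩
  refine (mul_pos hκ hc).trans_le
    (le_apply_of_eventually_add_mul_le (hasFDerivAt_pi'.1 hdiff.hasFDerivAt i) ?_)
  filter_upwards [hsub, hscale.eventually hslab, self_mem_nhdsWithin] with s hs hmass hspos
  have hmono := hG.Lag_subset_Lag_add_single ψ hij (le_of_lt hspos)
  have hgain : κ * (c * s) ≤
      μ.real (Lag Ω G (ψ + s • Pi.single j 1) i \ Lag Ω G ψ i) :=
    (ENNReal.ofReal_le_iff_le_toReal (measure_ne_top μ _)).1 (hmass.trans (measure_mono hs))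
  rw [measureReal_sdiff hmono (hG.measurableSet_Lag hΩ ψ i)] at hgain
  have hH (p : Fin N → ℝ) : Hfun Ω G ρ p i = μ.real (Lag Ω G p i) := rfl
  rw [hH, hH]
  linarith

lemma exists_strict_maximizer (hG : IsGeneratingFunction Ω G) (hd : 1 ≤ d) (hΩ : IsOpen Ω)
    (hρ : Measurable ρ) {ψ : Fin N → ℝ} {i : Fin N} (hi : 0 < Hfun Ω G ρ ψ i) :
    ∃ x, 0 < ρ x ∧ ∀ k, k ≠ i → G x k (ψ k) < G x i (ψ i) := by
  set μ := volume.withDensity fun x => ENNReal.ofReal (ρ x)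
  have hnull : μ (⋃ k ∈ {k | k ≠ i}, Gam Ω G ψ i k) = 0 := by
    refine (measure_biUnion_null_iff (to_countable _)).2 fun k hk => ?_
    exact withDensity_absolutelyContinuous _ _ (hG.volume_Gam hd hΩ ψ (Ne.symm hk))
  have hpos : μ {x | ¬ 0 < ρ x} = 0 := by
    refine (withDensity_apply_eq_zero hρ.ennreal_ofReal).2 (measure_mono_null ?_ measure_empty)
    exact fun x hx => hx.1 (ENNReal.ofReal_eq_zero.2 (not_lt.1 hx.2))
  by_contra! hnone
  refine hi.ne' (congrArg ENNReal.toReal (measure_mono_null ?_ (measure_union_null hpos hnull)))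
  intro x hx
  refine or_iff_not_imp_left.2 fun hρx => ?_
  obtain ⟨k, hki, hk⟩ := hnone x (not_not.1 hρx)
  exact mem_biUnion hki ⟨hx.1, le_antisymm hk (hx.2 k)⟩

lemma isIrreducibleGenerator_fderiv_Hfun (hG : IsGeneratingFunction Ω G) (hd : 1 ≤ d)
    (hΩ : IsOpen Ω) [Nonempty (Fin N)] (hρ : Continuous ρ) (hρ0 : ∀ x, 0 ≤ ρ x)
    (hρcs : HasCompactSupport ρ) (hρΩ : tsupport ρ ⊆ Ω)
    (hρconn : IsPreconnected {x | 0 < ρ x}) {ψ : Fin N → ℝ}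
    (hgen : ∀ i j k : Fin N, i ≠ j → i ≠ k → j ≠ k →
      μH[(d : ℝ) - 1] (Gam Ω G ψ i j ∩ Gam Ω G ψ i k) = 0)
    (hψ : ∀ i, 0 < Hfun Ω G ρ ψ i) :
    IsIrreducibleGenerator (fderiv ℝ (Hfun Ω G ρ) ψ).toLinearMap := by
  have hint : Integrable ρ := hρ.integrable_of_hasCompactSupport hρcs
  have hdiff := hG.differentiableAt_Hfun hd hΩ hρ hρ0 hρcs hρΩ hgen
  have hUΩ : {x | 0 < ρ x} ⊆ Ω := fun x hx => hρΩ (subset_tsupport ρ (ne_of_gt hx))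
  refine ⟨hG.sum_fderiv_Hfun hd hΩ hint hdiff, fun hij => hG.fderiv_Hfun_nonneg hint hdiff hij,
    fun S hS hSc => ?_⟩
  obtain ⟨x, hx, j, hj, i, hi, htie, hmax⟩ := exists_pure_tie (n := d - 1)
    (g := fun i x => G x i (ψ i)) (by rw [finrank_euclideanSpace_fin]; omega)
    (isOpen_lt continuous_const hρ) hρconn
    (fun i x hx =>
      (hG.contDiffAt_slice hΩ (hUΩ hx) i (ψ i)).continuousAt.continuousWithinAt)
    (fun i j k hij hik hjk => by
      rw [Nat.cast_pred hd]
      refine measure_mono_null ?_ (hgen i j k hij hik hjk)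
      exact fun x hx => ⟨⟨hUΩ hx.1, hx.2.1⟩, hUΩ hx.1, hx.2.2⟩)
    (fun i => hG.exists_strict_maximizer hd hΩ hρ.measurable (hψ i)) hS hSc
  have hij : i ≠ j := fun h => Finset.mem_compl.1 hi (h ▸ hj)
  exact ⟨j, hj, i, hi, hG.fderiv_Hfun_pos hd hΩ hρ hint hdiff (hUΩ hx) hx hij htie hmax⟩

end IsGeneratingFunction

end CellMasses

theorem differential_properties_general (hd : 1 ≤ d) (hN : 1 ≤ N)
    {Ω : Set (EuclideanSpace ℝ (Fin d))} (hΩ : IsOpen Ω)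
    {G : EuclideanSpace ℝ (Fin d) → Fin N → ℝ → ℝ} (hG : IsGeneratingFunction Ω G)
    {ρ : EuclideanSpace ℝ (Fin d) → ℝ} (hρ : Continuous ρ) (hρ0 : ∀ x, 0 ≤ ρ x)
    (hρcs : HasCompactSupport ρ) (hρΩ : tsupport ρ ⊆ Ω)
    (hρconn : IsPreconnected {x | 0 < ρ x}) {ψ : Fin N → ℝ}
    (hgen : ∀ i j k : Fin N, i ≠ j → i ≠ k → j ≠ k →
      μH[(d : ℝ) - 1] (Gam Ω G ψ i j ∩ Gam Ω G ψ i k) = 0)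
    (hψ : ∀ i, 0 < Hfun Ω G ρ ψ i) :
    Module.finrank ℝ (LinearMap.range (fderiv ℝ (Hfun Ω G ρ) ψ).toLinearMap) = N - 1 ∧
    ((LinearMap.range (fderiv ℝ (Hfun Ω G ρ) ψ).toLinearMap : Submodule ℝ (Fin N → ℝ)) :
        Set (Fin N → ℝ)) = {v : Fin N → ℝ | ∑ i, v i = 0} ∧
    (∀ w : Fin N → ℝ, w ≠ 0 → fderiv ℝ (Hfun Ω G ρ) ψ w = 0 →
      (∀ i, w i ≠ 0) ∧ ((∀ i, 0 < w i) ∨ (∀ i, w i < 0))) := by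
  have : Nonempty (Fin N) := ⟨⟨0, hN⟩⟩
  have hDH := hG.isIrreducibleGenerator_fderiv_Hfun hd hΩ hρ hρ0 hρcs hρΩ hρconn hgen hψ
  refine ⟨?_, hDH.coe_range_eq, fun w hw0 hw => ⟨hDH.ne_zero_of_mem_ker hw hw0,
    hDH.forall_pos_or_forall_neg_of_mem_ker hw hw0⟩⟩
  rw [hDH.finrank_range, Fintype.card_fin]

lemma isGeneratingFunction_of_hasGradientAt {Ω : Set (EuclideanSpace ℝ (Fin d))}
    {G : EuclideanSpace ℝ (Fin d) → Fin N → ℝ → ℝ}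
    {Gx : EuclideanSpace ℝ (Fin d) → Fin N → ℝ → EuclideanSpace ℝ (Fin d)}
    {Gv : EuclideanSpace ℝ (Fin d) → Fin N → ℝ → ℝ}
    (hGx : ∀ x ∈ Ω, ∀ i v, HasGradientAt (fun x' => G x' i v) (Gx x i v) x)
    (hGv : ∀ x ∈ Ω, ∀ i v, HasDerivAt (G x i) (Gv x i v) v)
    (hG : ∀ i, ContDiffOn ℝ 1 (fun q : EuclideanSpace ℝ (Fin d) × ℝ => G q.1 i q.2) (Ω ×ˢ univ))
    (hMono : ∀ x ∈ Ω, ∀ i v, Gv x i v < 0)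
    (hTwist : ∀ x ∈ Ω, Function.Injective fun q : Fin N × ℝ => (G x q.1 q.2, Gx x q.1 q.2)) :
    IsGeneratingFunction Ω G where
  contDiffOn := hG
  deriv_neg x hx i v := (hGv x hx i v).deriv ▸ hMono x hx i v
  injective_twist x hx p q hpq := by
    simp only [(hGx x hx _ _).hasFDerivAt.fderiv, Prod.mk.injEq, EmbeddingLike.apply_eq_iff_eq]
      at hpq
    exact hTwist x hx (Prod.ext hpq.1 hpq.2)

lemma interior_inter_setOf_pos_eq {T : Type*} [TopologicalSpace T] {X : Set T} {ρ : T → ℝ}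
    (hρ : Continuous ρ) (hρX : tsupport ρ ⊆ X) :
    interior X ∩ {x | 0 < ρ x} = {x | 0 < ρ x} :=
  inter_eq_right.2 (interior_maximal
    (fun _ hx => hρX (subset_tsupport ρ (ne_of_gt hx))) (isOpen_lt continuous_const hρ))

/-- Proposition 3.4: properties of the differential `DH(ψ)`: rank `N−1`, image `𝟙^⊥`,
and every nonzero kernel vector has all coordinates nonzero and of the same sign. -/
theorem differential_properties
    (hd : 1 ≤ d) (hN : 1 ≤ N)
    {Ω : Set (EuclideanSpace ℝ (Fin d))} (hΩo : IsOpen Ω) (hΩb : Bornology.IsBounded Ω)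
    (y : Fin N → EuclideanSpace ℝ (Fin d)) (hy : Function.Injective y)
    (G : EuclideanSpace ℝ (Fin d) → Fin N → ℝ → ℝ)
    (Gx : EuclideanSpace ℝ (Fin d) → Fin N → ℝ → EuclideanSpace ℝ (Fin d))
    (Gv : EuclideanSpace ℝ (Fin d) → Fin N → ℝ → ℝ)
    (hGx : ∀ x ∈ Ω, ∀ (i : Fin N) (v : ℝ), HasGradientAt (fun x' => G x' i v) (Gx x i v) x)
    (hGv : ∀ x ∈ Ω, ∀ (i : Fin N) (v : ℝ), HasDerivAt (fun v' => G x i v') (Gv x i v) v)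
    (hGxc : ∀ i : Fin N, ContinuousOn (fun q : EuclideanSpace ℝ (Fin d) × ℝ => Gx q.1 i q.2) (Ω ×ˢ Set.univ))
    (hGvc : ∀ i : Fin N, ContinuousOn (fun q : EuclideanSpace ℝ (Fin d) × ℝ => Gv q.1 i q.2) (Ω ×ˢ Set.univ))
    (hG2 : ∀ i : Fin N, ContDiffOn ℝ 2 (fun q : EuclideanSpace ℝ (Fin d) × ℝ => G q.1 i q.2) (Ω ×ˢ Set.univ))
    (hReg : ∀ α β : ℝ, α < β → ∃ C : ℝ, ∀ x ∈ Ω, ∀ i : Fin N, ∀ v ∈ Set.Icc α β, ‖Gx x i v‖ ≤ C)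
    (hMono : ∀ x ∈ Ω, ∀ (i : Fin N) (v : ℝ), Gv x i v < 0)
    (hTwist : ∀ x ∈ Ω, Function.Injective fun q : Fin N × ℝ => (G x q.1 q.2, Gx x q.1 q.2))
    {X : Set (EuclideanSpace ℝ (Fin d))} (hXc : IsCompact X) (hXΩ : X ⊆ Ω)
    (ρ : EuclideanSpace ℝ (Fin d) → ℝ) (hρc : Continuous ρ) (hρ0 : ∀ x, 0 ≤ ρ x)
    (hρsupp : tsupport ρ ⊆ X) (hρ1 : (∫ x, ρ x) = 1)
    (hGenΩ : ∀ (ψ : Fin N → ℝ) (i j k : Fin N), i ≠ j → i ≠ k → j ≠ k →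
      μH[(d : ℝ) - 1] (Gam Ω G ψ i j ∩ Gam Ω G ψ i k) = 0)
    (hGenX : ∀ (ψ : Fin N → ℝ) (i j : Fin N), i ≠ j →
      μH[(d : ℝ) - 1] (Gam Ω G ψ i j ∩ frontier X) = 0)
    (hpc : IsPathConnected (interior X ∩ {x | 0 < ρ x}))
    (ψ : Fin N → ℝ) (hψ : ∀ i : Fin N, 0 < Hfun Ω G ρ ψ i) :
    Module.finrank ℝ (LinearMap.range (fderiv ℝ (Hfun Ω G ρ) ψ).toLinearMap) = N - 1 ∧
    ((LinearMap.range (fderiv ℝ (Hfun Ω G ρ) ψ).toLinearMap : Submodule ℝ (Fin N → ℝ)) :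
        Set (Fin N → ℝ)) = {v : Fin N → ℝ | ∑ i, v i = 0} ∧
    (∀ w : Fin N → ℝ, w ≠ 0 → fderiv ℝ (Hfun Ω G ρ) ψ w = 0 →
      (∀ i, w i ≠ 0) ∧ ((∀ i, 0 < w i) ∨ (∀ i, w i < 0))) := by
  have hG := isGeneratingFunction_of_hasGradientAt hGx hGv
    (fun i => (hG2 i).of_le one_le_two) hMono hTwist
  exact differential_properties_general hd hN hΩo hG hρc hρ0
    (hXc.of_isClosed_subset (isClosed_tsupport ρ) hρsupp) (hρsupp.trans hXΩ)
    (interior_inter_setOf_pos_eq hρc hρsupp ▸ hpc.isConnected.isPreconnected) (hGenΩ ψ) hψ
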